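/- arXiv:1803.05750 — 2 statements merged into one kernel-verified Lean document; each statement's English description precedes it below -/
import Mathlib

section
/- Let 0 < R₁ < R₂ and n ≥ 3. Let S'(R₂) ⊂ ℝⁿ be the sphere of radius R₂ centered at a point c with |c| ≤ R₂ - R₁, and S(R₂) the sphere of radius R₂ centered at the origin. Let r(p) = |p| denote the distance of a point p from the origin. Then ∫_{S'(R₂)} (1/R₁^{n-2} − 1/r^{n-2})² dσ ≥ ∫_{S(R₂)} (1/R₁^{n-2} − 1/R₂^{n-2})² dσ, with equality if and only if c = 0. -/
open MeasureTheory Metric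
section SphereMeasure

variable {E : Type*} [NormedAddCommGroup E] [InnerProductSpace ℝ E]

lemma normalize_lip (R : ℝ) (hR : 0 < R) (a b : E) (ha : 1 ≤ ‖a‖) (hb : 1 ≤ ‖b‖) :
    ‖(R / ‖a‖) • a - (R / ‖b‖) • b‖ ≤ (2 * R) * ‖a - b‖ := by
  have ha0 : 0 < ‖a‖ := by linarith
  have hb0 : 0 < ‖b‖ := by linarith
  have e : (R / ‖a‖) • a - (R / ‖b‖) • b
      = (R / ‖a‖) • (a - b) + (R / ‖a‖ - R / ‖b‖) • b := by
    rw [smul_sub, sub_smul]; abel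
  rw [e]
  refine (norm_add_le _ _).trans ?_
  rw [norm_smul, norm_smul, Real.norm_eq_abs, Real.norm_eq_abs]
  have h1 : |R / ‖a‖| ≤ R := by
    rw [abs_of_pos (by positivity)]
    exact div_le_self hR.le ha
  have h2 : |R / ‖a‖ - R / ‖b‖| * ‖b‖ = (R / ‖a‖) * |‖b‖ - ‖a‖| := by
    have : R / ‖a‖ - R / ‖b‖ = (R / ‖a‖ / ‖b‖) * (‖b‖ - ‖a‖) := by field_simp
    rw [this, abs_mul, abs_of_pos (by positivity : 0 < R / ‖a‖ / ‖b‖)]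
    field_simp
  have h3 : |‖b‖ - ‖a‖| ≤ ‖a - b‖ := by
    rw [norm_sub_rev]; exact abs_norm_sub_norm_le b a
  rw [h2]
  have h4 : R / ‖a‖ ≤ R := div_le_self hR.le ha
  have := mul_le_mul h4 h3 (abs_nonneg _) hR.le
  have := mul_le_mul_of_nonneg_right h1 (norm_nonneg (a - b))
  linarith

variable [FiniteDimensional ℝ E] [MeasurableSpace E] [BorelSpace E]

lemma haus_hyper (n : ℕ) (hn : Module.finrank ℝ E = n + 1) (e : E) (he : ‖e‖ = 1) :
    Measure.IsAddHaarMeasure (μH[(n : ℝ)] : Measure (ℝ ∙ e)ᗮ) := by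
  haveI : Fact (Module.finrank ℝ E = n + 1) := ⟨hn⟩
  have h := Submodule.finrank_orthogonal_span_singleton (𝕜 := ℝ) (n := n) (v := e)
    (by rintro rfl; simp at he)
  have := isAddHaarMeasure_hausdorffMeasure (E := (ℝ ∙ e)ᗮ)
  rwa [h] at this

lemma sphere_finite (n : ℕ) (hn : Module.finrank ℝ E = n + 1) (R : ℝ) (hR : 0 < R) :
    (μH[(n : ℝ)] : Measure E) (sphere (0 : E) R) < ⊤ := by
  refine (isCompact_sphere (0 : E) R).measure_lt_top_of_nhdsWithin ?_
  intro x hx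
  have hxR : ‖x‖ = R := by simpa using hx
  set e : E := (R⁻¹) • x with hedef
  have he : ‖e‖ = 1 := by
    rw [hedef, norm_smul, hxR, Real.norm_eq_abs, abs_of_pos (by positivity)]; field_simp
  haveI := haus_hyper n hn e he
  let f : (ℝ ∙ e)ᗮ → E := fun w => (R / ‖e + (w : E)‖) • (e + (w : E))
  have horth : ∀ w : (ℝ ∙ e)ᗮ, inner ℝ e (w : E) = 0 := fun w =>
    Submodule.mem_orthogonal_singleton_iff_inner_right.1 w.2
  have hge : ∀ w : (ℝ ∙ e)ᗮ, 1 ≤ ‖e + (w : E)‖ := by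
    intro w
    have := real_inner_le_norm e (e + (w : E))
    rw [inner_add_right, horth, real_inner_self_eq_norm_sq, he] at this
    linarith
  have hf : LipschitzWith (Real.toNNReal (2 * R)) f := by
    refine LipschitzWith.of_dist_le_mul fun w w' => ?_
    rw [dist_eq_norm, dist_eq_norm, Real.coe_toNNReal _ (by positivity)]
    refine (normalize_lip R hR _ _ (hge w) (hge w')).trans (le_of_eq ?_)
    congr 1
    rw [add_sub_add_left_eq_sub]; rfl
  refine ⟨{y | R / 2 < inner ℝ e y} ∩ sphere 0 R, ?_, ?_⟩
  · rw [Set.inter_comm]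
    refine inter_mem_nhdsWithin _ (IsOpen.mem_nhds ?_ ?_)
    · exact isOpen_lt (by fun_prop) (by fun_prop)
    · show R / 2 < inner ℝ e x
      rw [hedef, inner_smul_left, real_inner_self_eq_norm_sq, hxR]
      simp only [conj_trivial]
      field_simp; linarith
  · have hsub : {y | R / 2 < inner ℝ e y} ∩ sphere 0 R ⊆ f '' closedBall 0 3 := by
      rintro y ⟨hy1, hy2⟩
      have hyR : ‖y‖ = R := by simpa using hy2
      simp only [Set.mem_setOf_eq] at hy1
      set s := inner ℝ e y with hs
      have hs0 : 0 < s := by linarith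
      have hw : s⁻¹ • y - e ∈ (ℝ ∙ e)ᗮ := by
        rw [Submodule.mem_orthogonal_singleton_iff_inner_right, inner_sub_right, inner_smul_right,
          real_inner_self_eq_norm_sq, he, ← hs]
        field_simp; norm_num
      have hn1 : ‖s⁻¹ • y‖ = R / s := by
        rw [norm_smul, hyR, Real.norm_eq_abs, abs_of_pos (by positivity)]; field_simp
      refine ⟨⟨_, hw⟩, ?_, ?_⟩
      · rw [mem_closedBall_zero_iff]
        show ‖s⁻¹ • y - e‖ ≤ 3
        refine (norm_sub_le _ _).trans ?_
        rw [hn1, he]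
        have : R / s ≤ 2 := by rw [div_le_iff₀ hs0]; linarith
        linarith
      · show (R / ‖e + (s⁻¹ • y - e)‖) • (e + (s⁻¹ • y - e)) = y
        rw [add_sub_cancel, hn1, smul_smul]
        have : R / (R / s) * s⁻¹ = 1 := by field_simp
        rw [this, one_smul]
    refine (measure_mono hsub).trans_lt ?_
    refine (hf.hausdorffMeasure_image_le (by positivity) _).trans_lt ?_
    refine ENNReal.mul_lt_top ?_ ?_
    · exact ENNReal.rpow_lt_top_of_nonneg (by positivity) ENNReal.coe_ne_top
    · exact (isCompact_closedBall _ _).measure_lt_top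

lemma sphere_pos (n : ℕ) (hn : Module.finrank ℝ E = n + 1) (R : ℝ) (hR : 0 < R) :
    0 < (μH[(n : ℝ)] : Measure E) (sphere (0 : E) R) := by
  haveI : Nontrivial E := Module.nontrivial_of_finrank_pos (R := ℝ) (by omega)
  obtain ⟨e, he⟩ := exists_norm_eq E (zero_le_one' ℝ)
  haveI := haus_hyper n hn e he
  let P : E → (ℝ ∙ e)ᗮ := (ℝ ∙ e)ᗮ.orthogonalProjectionOnto
  have hP : LipschitzWith 1 P := Submodule.lipschitzWith_orthogonalProjectionOnto _
  have h1 := hP.hausdorffMeasure_image_le (d := n) (by positivity) (sphere (0 : E) R)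
  have h2 : ball (0 : (ℝ ∙ e)ᗮ) R ⊆ P '' sphere (0 : E) R := by
    intro w hw
    have hwR : ‖w‖ < R := by simpa using hw
    have horth : inner ℝ e (w : E) = 0 := Submodule.mem_orthogonal_singleton_iff_inner_right.1 w.2
    refine ⟨(w : E) + Real.sqrt (R ^ 2 - ‖w‖ ^ 2) • e, ?_, ?_⟩
    · rw [mem_sphere_zero_iff_norm]
      have : ‖(w : E) + Real.sqrt (R ^ 2 - ‖w‖ ^ 2) • e‖ ^ 2 = R ^ 2 := by
        rw [norm_add_sq_real, inner_smul_right, real_inner_comm, horth, norm_smul, he, mul_one,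
          Real.norm_eq_abs, sq_abs, Real.sq_sqrt]
        · simp
        · have := norm_nonneg w
          nlinarith
      exact (pow_left_inj₀ (norm_nonneg _) hR.le two_ne_zero).1 this
    · show (ℝ ∙ e)ᗮ.orthogonalProjectionOnto _ = w
      rw [map_add, map_smul, Submodule.orthogonalProjectionOnto_orthogonalComplement_singleton_eq_zero,
        smul_zero, add_zero]
      exact Submodule.orthogonalProjectionOnto_mem_subspace_eq_self w
  have h3 : 0 < (μH[(n : ℝ)] : Measure (ℝ ∙ e)ᗮ) (ball 0 R) := measure_ball_pos _ _ hR
  have h4 := h3.trans_le ((measure_mono h2).trans h1)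
  simpa using h4

lemma sphere_inv (d R : ℝ) (L : E ≃ₗᵢ[ℝ] E) :
    MeasurePreserving L ((μH[d] : Measure E).restrict (sphere 0 R))
      ((μH[d] : Measure E).restrict (sphere 0 R)) := by
  have h := (L.toIsometryEquiv.measurePreserving_hausdorffMeasure d).restrict_preimage
    (s := sphere 0 R) isClosed_sphere.measurableSet
  have : L.toIsometryEquiv ⁻¹' (sphere 0 R) = sphere 0 R := by
    ext x; simp
  rw [this] at h
  exact h

lemma sphere_translate (d R : ℝ) (c : E) (f : E → ℝ) :
    ∫ p in sphere c R, f p ∂(μH[d] : Measure E) = ∫ x in sphere 0 R, f (x + c) ∂(μH[d]) := by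
  have h := (IsometryEquiv.addRight c).measurePreserving_hausdorffMeasure d
  have h2 := h.setIntegral_preimage_emb (IsometryEquiv.addRight c).toHomeomorph.measurableEmbedding
    f (sphere c R)
  rw [← h2]
  congr 2
  ext x; simp

end SphereMeasure

section Newton

variable {E : Type*} [NormedAddCommGroup E] [InnerProductSpace ℝ E]
  [FiniteDimensional ℝ E] [MeasurableSpace E] [BorelSpace E]

lemma refl_inner (e v : E) (he : ‖e‖ = 1) (hv : ‖v‖ = 1) (hev : inner ℝ e v = 0) (θ : ℝ) :
    ∃ L : E ≃ₗᵢ[ℝ] E, ∀ x, inner ℝ e (L x) = -(Real.cos θ * inner ℝ e x + Real.sin θ * inner ℝ v x) ∧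
      inner ℝ v (L x) = Real.cos θ * inner ℝ v x - Real.sin θ * inner ℝ e x := by
  set u : E := Real.cos (θ / 2) • e + Real.sin (θ / 2) • v with hu
  have hcs := Real.sin_sq_add_cos_sq (θ / 2)
  have hun : ‖u‖ = 1 := by
    have : ‖u‖ ^ 2 = 1 ^ 2 := by
      rw [hu, norm_add_sq_real, inner_smul_left, inner_smul_right, hev, norm_smul, norm_smul, he, hv]
      simp only [Real.norm_eq_abs, mul_one, sq_abs]
      simp
    exact (pow_left_inj₀ (norm_nonneg _) zero_le_one two_ne_zero).1 this
  have hc : Real.cos θ = Real.cos (θ / 2) ^ 2 - Real.sin (θ / 2) ^ 2 := by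
    rw [← Real.cos_two_mul']; ring_nf
  have hs : Real.sin θ = 2 * Real.sin (θ / 2) * Real.cos (θ / 2) := by
    rw [← Real.sin_two_mul]; ring_nf
  have hve : inner ℝ v e = 0 := by rw [real_inner_comm]; exact hev
  have hee : inner ℝ e e = 1 := by rw [real_inner_self_eq_norm_sq, he]; norm_num
  have hvv : inner ℝ v v = 1 := by rw [real_inner_self_eq_norm_sq, hv]; norm_num
  refine ⟨(ℝ ∙ u)ᗮ.reflection, fun x => ?_⟩
  have hx : (ℝ ∙ u)ᗮ.reflection x = x - (2 * inner ℝ u x) • u := by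
    rw [Submodule.reflection_orthogonal_apply, Submodule.reflection_singleton_apply, hun]
    simp [two_smul, two_mul, add_smul]
  have hux : inner ℝ u x = Real.cos (θ / 2) * inner ℝ e x + Real.sin (θ / 2) * inner ℝ v x := by
    rw [hu, inner_add_left, inner_smul_left, inner_smul_left]; simp
  have heu : inner ℝ e u = Real.cos (θ / 2) := by
    rw [hu, inner_add_right, inner_smul_right, inner_smul_right, hee, hev]; simp
  have hvu : inner ℝ v u = Real.sin (θ / 2) := by
    rw [hu, inner_add_right, inner_smul_right, inner_smul_right, hvv, hve]; simp
  rw [hx, inner_sub_right, inner_sub_right, inner_smul_right, inner_smul_right, heu, hvu, hux, hc, hs]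
  constructor
  · linear_combination (-inner ℝ e x) * hcs
  · linear_combination (-inner ℝ v x) * hcs

lemma rot_one (μ : Measure E) [IsFiniteMeasure μ] (R : ℝ) (hR : 0 < R)
    (hS : ∀ᵐ x ∂μ, ‖x‖ = R) (hinv : ∀ L : E ≃ₗᵢ[ℝ] E, MeasurePreserving L μ μ)
    (e v : E) (he : ‖e‖ = 1) (hv : ‖v‖ = 1) (hev : inner ℝ e v = 0)
    (ψ ψ' : ℝ → ℝ) (hm : Measurable ψ) (hm' : Measurable ψ') (C : ℝ)
    (hψ : ∀ y, |y| ≤ R → HasDerivAt ψ (ψ' y) y) (hC : ∀ y, |y| ≤ R → |ψ y| ≤ C)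
    (hC' : ∀ y, |y| ≤ R → |ψ' y| ≤ C) :
    Integrable (fun x : E => -(inner ℝ e x) * ψ (inner ℝ e x) + (inner ℝ v x) ^ 2 * ψ' (inner ℝ e x)) μ ∧
    ∫ x, (-(inner ℝ e x) * ψ (inner ℝ e x) + (inner ℝ v x) ^ 2 * ψ' (inner ℝ e x)) ∂μ = 0 := by
  let a : ℝ → E → ℝ := fun θ x => Real.cos θ * inner ℝ e x + Real.sin θ * inner ℝ v x
  let b : ℝ → E → ℝ := fun θ x => Real.cos θ * inner ℝ v x - Real.sin θ * inner ℝ e x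
  let F : ℝ → E → ℝ := fun θ x => b θ x * ψ (a θ x)
  let F' : ℝ → E → ℝ := fun θ x => -(a θ x) * ψ (a θ x) + (b θ x) ^ 2 * ψ' (a θ x)
  have ham : ∀ θ, Measurable (a θ) := fun θ => by
    have : Continuous (a θ) := by fun_prop
    exact this.measurable
  have hbm : ∀ θ, Measurable (b θ) := fun θ => by
    have : Continuous (b θ) := by fun_prop
    exact this.measurable
  have hC0 : 0 ≤ C := (abs_nonneg _).trans (hC 0 (by simpa using hR.le))
  have hab : ∀ θ, ∀ x : E, ‖x‖ = R → |a θ x| ≤ R ∧ |b θ x| ≤ R := by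
    intro θ x hx
    obtain ⟨L, hL⟩ := refl_inner e v he hv hev θ
    have h1 : a θ x = - inner ℝ e (L x) := by rw [(hL x).1]; simp [a]
    have h2 : b θ x = inner ℝ v (L x) := by rw [(hL x).2]
    rw [h1, h2, abs_neg]
    have h3 := abs_real_inner_le_norm e (L x)
    have h4 := abs_real_inner_le_norm v (L x)
    rw [L.norm_map, hx, he, one_mul] at h3
    rw [L.norm_map, hx, hv, one_mul] at h4
    exact ⟨h3, h4⟩
  have hconst : ∀ θ, ∫ x, F θ x ∂μ = ∫ x, inner ℝ v x * ψ (-inner ℝ e x) ∂μ := by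
    intro θ
    obtain ⟨L, hL⟩ := refl_inner e v he hv hev θ
    rw [← (hinv L).integral_comp L.toHomeomorph.measurableEmbedding
      (fun x => inner ℝ v x * ψ (-inner ℝ e x))]
    congr 1
    ext x
    rw [(hL x).1, (hL x).2, neg_neg]
  have key := hasDerivAt_integral_of_dominated_loc_of_deriv_le (μ := μ) (F := F) (F' := F')
    (x₀ := (0 : ℝ)) (s := Set.univ) (bound := fun _ => R * C + R ^ 2 * C) Filter.univ_mem
    (Filter.Eventually.of_forall fun θ =>
      ((hbm θ).mul (hm.comp (ham θ))).aestronglyMeasurable) ?_ ?_ ?_ ?_ ?_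
  · have h0 : (fun θ => ∫ x, F θ x ∂μ) = fun _ => ∫ x, inner ℝ v x * ψ (-inner ℝ e x) ∂μ :=
      funext hconst
    have hF0 : F' 0 = fun x : E =>
        -(inner ℝ e x) * ψ (inner ℝ e x) + (inner ℝ v x) ^ 2 * ψ' (inner ℝ e x) := by
      ext x; simp [F', a, b]
    rw [h0, hF0] at key
    exact ⟨key.1, key.2.unique (hasDerivAt_const _ _)⟩
  · refine Integrable.of_bound (((hbm 0).mul (hm.comp (ham 0))).aestronglyMeasurable) (R * C) ?_
    filter_upwards [hS] with x hx
    rw [Real.norm_eq_abs]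
    show |b 0 x * ψ (a 0 x)| ≤ _
    rw [abs_mul]
    exact mul_le_mul (hab 0 x hx).2 (hC _ (hab 0 x hx).1) (abs_nonneg _) hR.le
  · exact (((ham 0).neg.mul (hm.comp (ham 0))).add
      (((hbm 0).pow_const 2).mul (hm'.comp (ham 0)))).aestronglyMeasurable
  · filter_upwards [hS] with x hx θ _
    obtain ⟨h1, h2⟩ := hab θ x hx
    rw [Real.norm_eq_abs]
    refine (abs_add_le _ _).trans (add_le_add ?_ ?_)
    · rw [abs_mul, abs_neg]
      exact mul_le_mul h1 (hC _ h1) (abs_nonneg _) hR.le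
    · rw [abs_mul, abs_pow]
      exact mul_le_mul (pow_le_pow_left₀ (abs_nonneg _) h2 2) (hC' _ h1) (abs_nonneg _) (by positivity)
  · exact integrable_const _
  · filter_upwards [hS] with x hx θ _
    have hda : HasDerivAt (fun θ => a θ x) (b θ x) θ := by
      have := ((Real.hasDerivAt_cos θ).mul_const (inner ℝ e x)).add
        ((Real.hasDerivAt_sin θ).mul_const (inner ℝ v x))
      refine this.congr_deriv ?_
      simp only [b]; ring
    have hdb : HasDerivAt (fun θ => b θ x) (-(a θ x)) θ := by
      have := ((Real.hasDerivAt_cos θ).mul_const (inner ℝ v x)).sub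
        ((Real.hasDerivAt_sin θ).mul_const (inner ℝ e x))
      refine this.congr_deriv ?_
      simp only [a]; ring
    have := hdb.mul ((hψ _ (hab θ x hx).1).comp θ hda)
    refine this.congr_deriv ?_
    simp only [F', Function.comp]; ring

lemma rot_sum (m : ℕ) (hfr : Module.finrank ℝ E = m + 1)
    (μ : Measure E) [IsFiniteMeasure μ] (R : ℝ) (hR : 0 < R)
    (hS : ∀ᵐ x ∂μ, ‖x‖ = R) (hinv : ∀ L : E ≃ₗᵢ[ℝ] E, MeasurePreserving L μ μ)
    (e : E) (he : ‖e‖ = 1)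
    (ψ ψ' : ℝ → ℝ) (hm : Measurable ψ) (hm' : Measurable ψ') (C : ℝ)
    (hψ : ∀ y, |y| ≤ R → HasDerivAt ψ (ψ' y) y) (hC : ∀ y, |y| ≤ R → |ψ y| ≤ C)
    (hC' : ∀ y, |y| ≤ R → |ψ' y| ≤ C) :
    ∫ x, ((R ^ 2 - (inner ℝ e x) ^ 2) * ψ' (inner ℝ e x)
      - m * (inner ℝ e x * ψ (inner ℝ e x))) ∂μ = 0 := by
  have ho : Orthonormal ℝ (({0} : Set (Fin (m + 1))).domRestrict (fun _ => e)) := by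
    rw [orthonormal_iff_ite]
    rintro ⟨i, rfl⟩ ⟨j, rfl⟩
    simp [Set.domRestrict, he]
  obtain ⟨b, hb⟩ := ho.exists_orthonormalBasis_extension_of_card_eq (by simp [hfr])
  have hb0 : b 0 = e := hb 0 rfl
  have hi : ∀ i : Fin m, _ := fun i => rot_one μ R hR hS hinv e (b i.succ) he (b.norm_eq_one _)
    (by rw [← hb0]; exact b.inner_eq_zero (Fin.succ_ne_zero i).symm) ψ ψ' hm hm' C hψ hC hC'
  have hsum := integral_finsetSum (μ := μ) Finset.univ (fun i _ => (hi i).1)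
  rw [Finset.sum_eq_zero (fun i _ => (hi i).2)] at hsum
  rw [← hsum]
  refine integral_congr_ae ?_
  filter_upwards [hS] with x hx
  have h := b.sum_sq_norm_inner_right x
  rw [Fin.sum_univ_succ, hb0, hx] at h
  simp only [Real.norm_eq_abs, sq_abs] at h
  rw [Finset.sum_add_distrib, Finset.sum_const, Finset.card_univ, Fintype.card_fin,
    nsmul_eq_mul]
  have h' : ∑ i : Fin m, inner ℝ (b i.succ) x ^ 2 = R ^ 2 - inner ℝ e x ^ 2 := by linarith
  rw [← Finset.sum_mul, h']; ring


lemma D_lower (R t y : ℝ) (ht : |t| < R) (hy : |y| ≤ R) :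
    (R - |t|) ^ 2 ≤ R ^ 2 + 2 * t * y + t ^ 2 := by
  have h : -(|t| * R) ≤ t * y := by
    have h1 : |t * y| ≤ |t| * R := by
      rw [abs_mul]; exact mul_le_mul_of_nonneg_left hy (abs_nonneg _)
    linarith [neg_abs_le (t * y)]
  nlinarith [sq_abs t]

lemma hasDeriv_param (μ : Measure E) [IsFiniteMeasure μ] (R : ℝ) (hR : 0 < R)
    (hS : ∀ᵐ x ∂μ, ‖x‖ = R) (e : E) (he : ‖e‖ = 1) (j : ℕ) (q : ℝ) (hq : q ≤ 0)
    (t : ℝ) (ht : |t| < R) :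
    Integrable (fun x : E => (inner ℝ e x + t) ^ j * (R ^ 2 + 2 * t * inner ℝ e x + t ^ 2) ^ q) μ ∧
    HasDerivAt (fun t : ℝ => ∫ x, (inner ℝ e x + t) ^ j * (R ^ 2 + 2 * t * inner ℝ e x + t ^ 2) ^ q ∂μ)
      (∫ x, (j * (inner ℝ e x + t) ^ (j - 1) * (R ^ 2 + 2 * t * inner ℝ e x + t ^ 2) ^ q
        + 2 * q * (inner ℝ e x + t) ^ (j + 1) * (R ^ 2 + 2 * t * inner ℝ e x + t ^ 2) ^ (q - 1)) ∂μ) t := by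
  have hym : Measurable (fun x : E => (inner ℝ e x : ℝ)) := by
    have : Continuous (fun x : E => (inner ℝ e x : ℝ)) := by fun_prop
    exact this.measurable
  set δ := (R - |t|) / 2 with hδ
  have hδ0 : 0 < δ := by rw [hδ]; linarith
  have hyb : ∀ x : E, ‖x‖ = R → |(inner ℝ e x : ℝ)| ≤ R := by
    intro x hx
    have := abs_real_inner_le_norm e x
    rwa [he, hx, one_mul] at this
  have htt : ∀ τ ∈ ball t δ, |τ| < R ∧ δ ≤ R - |τ| := by
    intro τ hτ
    rw [mem_ball, Real.dist_eq] at hτ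
    have : |τ| ≤ |t| + |τ - t| := by
      have := abs_add_le t (τ - t); simpa using this
    constructor <;> linarith
  have hD : ∀ τ ∈ ball t δ, ∀ y, |y| ≤ R → δ ^ 2 ≤ R ^ 2 + 2 * τ * y + τ ^ 2 := by
    intro τ hτ y hy
    refine le_trans ?_ (D_lower R τ y (htt τ hτ).1 hy)
    exact pow_le_pow_left₀ hδ0.le (htt τ hτ).2 2
  have hDq : ∀ τ ∈ ball t δ, ∀ y, |y| ≤ R → ∀ p ≤ (0 : ℝ),
      |(R ^ 2 + 2 * τ * y + τ ^ 2) ^ p| ≤ (δ ^ 2) ^ p := by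
    intro τ hτ y hy p hp
    have h1 := hD τ hτ y hy
    rw [abs_of_nonneg (Real.rpow_nonneg ((by positivity : (0 : ℝ) ≤ δ ^ 2).trans h1) _)]
    exact Real.rpow_le_rpow_of_nonpos (by positivity) h1 hp
  have hyt : ∀ τ ∈ ball t δ, ∀ y, |y| ≤ R → ∀ k : ℕ, |(y + τ) ^ k| ≤ (2 * R) ^ k := by
    intro τ hτ y hy k
    rw [abs_pow]
    refine pow_le_pow_left₀ (abs_nonneg _) ?_ k
    have := abs_add_le y τ
    linarith [(htt τ hτ).1]
  have htm : t ∈ ball t δ := mem_ball_self hδ0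
  have hint : Integrable
      (fun x : E => (inner ℝ e x + t) ^ j * (R ^ 2 + 2 * t * inner ℝ e x + t ^ 2) ^ q) μ := by
    refine Integrable.of_bound (by fun_prop) ((2 * R) ^ j * (δ ^ 2) ^ q) ?_
    filter_upwards [hS] with x hx
    rw [Real.norm_eq_abs, abs_mul]
    exact mul_le_mul (hyt t htm _ (hyb x hx) j) (hDq t htm _ (hyb x hx) q hq) (abs_nonneg _)
      (by positivity)
  refine ⟨hint, ?_⟩
  refine (hasDerivAt_integral_of_dominated_loc_of_deriv_le (μ := μ)
    (F := fun (t : ℝ) (x : E) => (inner ℝ e x + t) ^ j * (R ^ 2 + 2 * t * inner ℝ e x + t ^ 2) ^ q)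
    (F' := fun (t : ℝ) (x : E) => j * (inner ℝ e x + t) ^ (j - 1) *
        (R ^ 2 + 2 * t * inner ℝ e x + t ^ 2) ^ q
        + 2 * q * (inner ℝ e x + t) ^ (j + 1) * (R ^ 2 + 2 * t * inner ℝ e x + t ^ 2) ^ (q - 1))
    (x₀ := t) (s := ball t δ)
    (bound := fun _ => j * (2 * R) ^ (j - 1) * (δ ^ 2) ^ q
      + |2 * q| * (2 * R) ^ (j + 1) * (δ ^ 2) ^ (q - 1))
    (ball_mem_nhds t hδ0) (Filter.Eventually.of_forall fun τ => by fun_prop)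
    hint (by fun_prop) ?_ (integrable_const _) ?_).2
  · filter_upwards [hS] with x hx τ hτ
    rw [Real.norm_eq_abs]
    refine (abs_add_le _ _).trans (add_le_add ?_ ?_)
    · rw [abs_mul, abs_mul, Nat.abs_cast]
      exact mul_le_mul (mul_le_mul_of_nonneg_left (hyt τ hτ _ (hyb x hx) _) (by positivity))
        (hDq τ hτ _ (hyb x hx) q hq) (abs_nonneg _) (by positivity)
    · rw [abs_mul, abs_mul]
      exact mul_le_mul (mul_le_mul_of_nonneg_left (hyt τ hτ _ (hyb x hx) _) (abs_nonneg _))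
        (hDq τ hτ _ (hyb x hx) (q - 1) (by linarith)) (abs_nonneg _) (by positivity)
  · filter_upwards [hS] with x hx τ hτ
    have hpos : 0 < R ^ 2 + 2 * τ * inner ℝ e x + τ ^ 2 :=
      lt_of_lt_of_le (by positivity) (hD τ hτ _ (hyb x hx))
    have hd1 : HasDerivAt (fun τ : ℝ => R ^ 2 + 2 * τ * inner ℝ e x + τ ^ 2)
        (2 * (inner ℝ e x + τ)) τ := by
      have := ((((hasDerivAt_id τ).const_mul 2).mul_const (inner ℝ e x)).const_add (R ^ 2)).add
        (hasDerivAt_pow 2 τ)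
      refine this.congr_deriv ?_
      simp; ring
    have hd2 : HasDerivAt (fun τ : ℝ => (inner ℝ e x + τ) ^ j)
        (j * (inner ℝ e x + τ) ^ (j - 1)) τ := by
      have := ((hasDerivAt_id τ).const_add (inner ℝ e x)).pow j
      refine this.congr_deriv ?_
      simp
    have := hd2.mul (hd1.rpow_const (p := q) (Or.inl hpos.ne'))
    refine this.congr_deriv ?_
    ring

lemma newton (m : ℕ) (hm2 : 1 ≤ m) (hfr : Module.finrank ℝ E = m + 1)
    (μ : Measure E) [IsFiniteMeasure μ] (R : ℝ) (hR : 0 < R)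
    (hS : ∀ᵐ x ∂μ, ‖x‖ = R) (hinv : ∀ L : E ≃ₗᵢ[ℝ] E, MeasurePreserving L μ μ)
    (e : E) (he : ‖e‖ = 1) (T : ℝ) (hT0 : 0 ≤ T) (hT : T < R) :
    ∫ x, (R ^ 2 + 2 * T * inner ℝ e x + T ^ 2) ^ (-(((m : ℝ) + 1) / 2 - 1)) ∂μ
      = ∫ x, (R ^ 2) ^ (-(((m : ℝ) + 1) / 2 - 1)) ∂μ := by
  have hm1 : (1 : ℝ) ≤ m := by exact_mod_cast hm2
  set s : ℝ := ((m : ℝ) + 1) / 2 with hs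
  have hs1 : 1 ≤ s := by rw [hs]; linarith
  let D : ℝ → E → ℝ := fun t x => R ^ 2 + 2 * t * inner ℝ e x + t ^ 2
  have hyb : ∀ x : E, ‖x‖ = R → |(inner ℝ e x : ℝ)| ≤ R := by
    intro x hx
    have := abs_real_inner_le_norm e x
    rwa [he, hx, one_mul] at this
  let J : ℝ → ℝ := fun t => ∫ x, (inner ℝ e x + t) ^ 1 * (D t x) ^ (-s) ∂μ
  let J' : ℝ → ℝ := fun t => ∫ x, (((1 : ℕ) : ℝ) * (inner ℝ e x + t) ^ (1 - 1) * (D t x) ^ (-s)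
        + 2 * (-s) * (inner ℝ e x + t) ^ (1 + 1) * (D t x) ^ (-s - 1)) ∂μ
  let g : ℝ → ℝ := fun t => ∫ x, (inner ℝ e x + t) ^ 0 * (D t x) ^ (-(s - 1)) ∂μ
  have hJ : ∀ t, |t| < R → HasDerivAt J (J' t) t := fun t ht =>
    (hasDeriv_param μ R hR hS e he 1 (-s) (by linarith) t ht).2
  have hg : ∀ t, |t| < R → HasDerivAt g (-2 * (s - 1) * J t) t := by
    intro t ht
    refine (hasDeriv_param μ R hR hS e he 0 (-(s - 1)) (by linarith) t ht).2.congr_deriv ?_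
    rw [← integral_const_mul]
    refine integral_congr_ae (Filter.Eventually.of_forall fun x => ?_)
    have : -(s - 1) - 1 = -s := by ring
    simp only [this, D]
    simp; ring
  -- the differential equation
  have hode : ∀ t, |t| < R → t * J' t + m * J t = 0 := by
    intro t ht
    have hpos : ∀ y, |y| ≤ R → (R - |t|) ^ 2 ≤ R ^ 2 + 2 * t * y + t ^ 2 :=
      fun y hy => D_lower R t y ht hy
    have hR' : 0 < (R - |t|) ^ 2 := by
      have : 0 < R - |t| := by linarith
      positivity
    have hb : ∀ y, |y| ≤ R → ∀ p ≤ (0 : ℝ), |(R ^ 2 + 2 * t * y + t ^ 2) ^ p| ≤ ((R - |t|) ^ 2) ^ p := by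
      intro y hy p hp
      rw [abs_of_nonneg (Real.rpow_nonneg (hR'.le.trans (hpos y hy)) _)]
      exact Real.rpow_le_rpow_of_nonpos hR' (hpos y hy) hp
    set C1 := ((R - |t|) ^ 2) ^ (-s)
    set C2 := |2 * t * (-s)| * ((R - |t|) ^ 2) ^ (-s - 1)
    have h := rot_sum m hfr μ R hR hS hinv e he (fun y => (R ^ 2 + 2 * t * y + t ^ 2) ^ (-s))
      (fun y => 2 * t * (-s) * (R ^ 2 + 2 * t * y + t ^ 2) ^ (-s - 1)) (by fun_prop) (by fun_prop)
      (max C1 C2) ?_ ?_ ?_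
    · have hi0 := (hasDeriv_param μ R hR hS e he 0 (-s) (by linarith) t ht).1
      have hi1 := (hasDeriv_param μ R hR hS e he 1 (-s) (by linarith) t ht).1
      have hi2 := (hasDeriv_param μ R hR hS e he 2 (-s - 1) (by linarith) t ht).1
      have hJ'int : Integrable (fun x => (((1 : ℕ) : ℝ) * (inner ℝ e x + t) ^ (1 - 1) * (D t x) ^ (-s)
        + 2 * (-s) * (inner ℝ e x + t) ^ (1 + 1) * (D t x) ^ (-s - 1))) μ := by
        refine (hi0.add (hi2.const_mul (2 * (-s)))).congr
          (Filter.Eventually.of_forall fun x => ?_)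
        simp [D]; ring
      have e1 : t * J' t + m * J t = ∫ x, (t * (((1 : ℕ) : ℝ) * (inner ℝ e x + t) ^ (1 - 1) * (D t x) ^ (-s)
        + 2 * (-s) * (inner ℝ e x + t) ^ (1 + 1) * (D t x) ^ (-s - 1))
          + m * ((inner ℝ e x + t) ^ 1 * (D t x) ^ (-s))) ∂μ := by
        rw [integral_add (hJ'int.const_mul t) (hi1.const_mul (m : ℝ)), integral_const_mul,
          integral_const_mul]
      rw [e1, ← neg_eq_zero, ← integral_neg, ← h]
      refine integral_congr_ae ?_
      filter_upwards [hS] with x hx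
      have hDp : 0 < R ^ 2 + 2 * t * inner ℝ e x + t ^ 2 := hR'.trans_le (hpos _ (hyb x hx))
      have hD1 : (R ^ 2 + 2 * t * inner ℝ e x + t ^ 2) ^ (-s)
          = (R ^ 2 + 2 * t * inner ℝ e x + t ^ 2) ^ (-s - 1)
            * (R ^ 2 + 2 * t * inner ℝ e x + t ^ 2) := by
        rw [← Real.rpow_add_one hDp.ne']; ring_nf
      have hms : (m : ℝ) = 2 * s - 1 := by rw [hs]; ring
      simp only [D, hD1, hms]
      push_cast
      ring
    · intro y hy
      have hd1 : HasDerivAt (fun y : ℝ => R ^ 2 + 2 * t * y + t ^ 2) (2 * t) y := by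
        have := (((hasDerivAt_id y).const_mul (2 * t)).const_add (R ^ 2)).add_const (t ^ 2)
        refine this.congr_deriv ?_
        simp
      exact hd1.rpow_const (p := -s) (Or.inl (hR'.trans_le (hpos y hy)).ne')
    · intro y hy
      exact (hb y hy _ (by linarith)).trans (le_max_left _ _)
    · intro y hy
      rw [abs_mul]
      exact (mul_le_mul_of_nonneg_left (hb y hy _ (by linarith)) (abs_nonneg _)).trans
        (le_max_right _ _)
  have habs : ∀ t ∈ Set.Icc 0 T, |t| < R := by
    intro t ht; rw [abs_of_nonneg ht.1]; linarith [ht.2]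
  have hJ0 : ∀ t ∈ Set.Icc 0 T, J t = 0 := by
    have hG : ∀ t, |t| < R → HasDerivAt (fun t => t ^ m * J t) 0 t := by
      intro t ht
      have := (hasDerivAt_pow m t).mul (hJ t ht)
      refine this.congr_deriv ?_
      have h := hode t ht
      obtain ⟨k, rfl⟩ : ∃ k, m = k + 1 := ⟨m - 1, by omega⟩
      simp only [Nat.add_sub_cancel]
      rw [pow_succ]
      linear_combination t ^ k * h
    have hc := constant_of_has_deriv_right_zero (f := fun t => t ^ m * J t) (a := 0) (b := T)
      (fun t ht => (hG t (habs t ht)).continuousAt.continuousWithinAt)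
      (fun t ht => (hG t (habs t ⟨ht.1, ht.2.le⟩)).hasDerivWithinAt)
    intro t ht
    rcases eq_or_lt_of_le ht.1 with h0 | h0
    · have h := hode t (habs t ht)
      rw [← h0, zero_mul, zero_add] at h
      rw [← h0]
      exact (mul_eq_zero.1 h).resolve_left (by positivity)
    · have h := hc t ht
      rw [zero_pow (by omega), zero_mul] at h
      exact (mul_eq_zero.1 h).resolve_left (by positivity)
  have hfin := constant_of_has_deriv_right_zero (f := g) (a := 0) (b := T)
      (fun t ht => (hg t (habs t ht)).continuousAt.continuousWithinAt)
      (fun t ht => by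
        have := (hg t (habs t ⟨ht.1, ht.2.le⟩)).hasDerivWithinAt (s := Set.Ici t)
        rwa [hJ0 t ⟨ht.1, ht.2.le⟩, mul_zero] at this) T ⟨hT0, le_rfl⟩
  simpa [g, D] using hfin

end Newton

lemma pow_sq_rpow (a : ℝ) (ha : 0 ≤ a) (k : ℕ) : (a ^ 2) ^ (-((k : ℝ) / 2)) = 1 / a ^ k := by
  rw [Real.rpow_neg (by positivity), ← Real.rpow_natCast a 2, ← Real.rpow_mul ha, one_div]
  congr 1
  rw [← Real.rpow_natCast a k]
  congr 1
  push_cast; ring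

theorem stmt_6 (n : ℕ) (hn : 3 ≤ n) (R₁ R₂ : ℝ) (h1 : 0 < R₁) (h12 : R₁ < R₂)
    (c : EuclideanSpace ℝ (Fin n)) (hc : ‖c‖ ≤ R₂ - R₁) :
    (∫ p in Metric.sphere c R₂, (1 / R₁ ^ (n - 2) - 1 / ‖p‖ ^ (n - 2))^2
        ∂(μH[((n:ℝ) - 1)])) ≥
      (∫ p in Metric.sphere (0 : EuclideanSpace ℝ (Fin n)) R₂,
        (1 / R₁ ^ (n - 2) - 1 / R₂ ^ (n - 2))^2 ∂(μH[((n:ℝ) - 1)])) ∧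
    ((∫ p in Metric.sphere c R₂, (1 / R₁ ^ (n - 2) - 1 / ‖p‖ ^ (n - 2))^2
        ∂(μH[((n:ℝ) - 1)])) =
      (∫ p in Metric.sphere (0 : EuclideanSpace ℝ (Fin n)) R₂,
        (1 / R₁ ^ (n - 2) - 1 / R₂ ^ (n - 2))^2 ∂(μH[((n:ℝ) - 1)])) ↔ c = 0) := by
  rw [sphere_translate]
  obtain ⟨k, rfl⟩ : ∃ k, n = k + 2 := ⟨n - 2, by omega⟩
  have hR2 : 0 < R₂ := h1.trans h12
  have hd : (((k + 2 : ℕ) : ℝ) - 1) = ((k + 1 : ℕ) : ℝ) := by push_cast; ring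
  rw [hd]
  simp only [Nat.add_sub_cancel]
  have hfr : Module.finrank ℝ (EuclideanSpace ℝ (Fin (k + 2))) = (k + 1) + 1 := by simp
  have hfin := sphere_finite (k + 1) hfr R₂ hR2
  have hpos := sphere_pos (k + 1) hfr R₂ hR2
  have hinv := sphere_inv (E := EuclideanSpace ℝ (Fin (k + 2))) ((k + 1 : ℕ) : ℝ) R₂
  have hS : ∀ᵐ x ∂((μH[((k + 1 : ℕ) : ℝ)] : Measure (EuclideanSpace ℝ (Fin (k + 2)))).restrict
      (sphere 0 R₂)), ‖x‖ = R₂ := by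
    filter_upwards [ae_restrict_mem isClosed_sphere.measurableSet] with x hx
    simpa using hx
  have hμ : ((μH[((k + 1 : ℕ) : ℝ)] : Measure (EuclideanSpace ℝ (Fin (k + 2)))).restrict
      (sphere 0 R₂)).real Set.univ ≠ 0 := by
    rw [measureReal_restrict_apply_univ, Measure.real]
    exact (ENNReal.toReal_pos hpos.ne' hfin.ne).ne'
  have : IsFiniteMeasure ((μH[((k + 1 : ℕ) : ℝ)] : Measure (EuclideanSpace ℝ (Fin (k + 2)))).restrict
      (sphere 0 R₂)) := ⟨by simpa using hfin⟩
  generalize ((μH[((k + 1 : ℕ) : ℝ)] : Measure (EuclideanSpace ℝ (Fin (k + 2)))).restrict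
      (sphere 0 R₂)) = μ at *
  -- the function `f` and its mean
  set f : EuclideanSpace ℝ (Fin (k + 2)) → ℝ := fun x => 1 / ‖x + c‖ ^ k with hf
  have hk : 1 ≤ k := by omega
  have hge : ∀ᵐ x ∂μ, R₁ ≤ ‖x + c‖ := by
    filter_upwards [hS] with x hx
    have := norm_sub_le (x + c) c
    rw [add_sub_cancel_right, hx] at this
    linarith
  have hfm : Measurable f := by fun_prop
  have hfb : ∀ᵐ x ∂μ, ‖f x‖ ≤ 1 / R₁ ^ k := by
    filter_upwards [hge] with x hx
    rw [Real.norm_eq_abs, abs_of_nonneg (by positivity)]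
    exact one_div_le_one_div_of_le (by positivity) (pow_le_pow_left₀ h1.le hx k)
  have hfi : Integrable f μ := Integrable.of_bound hfm.aestronglyMeasurable _ hfb
  have hmean : ∫ x, f x ∂μ = ∫ x, 1 / R₂ ^ k ∂μ := by
    obtain ⟨e, he, hce⟩ : ∃ e : EuclideanSpace ℝ (Fin (k + 2)), ‖e‖ = 1 ∧ c = ‖c‖ • e := by
      by_cases hc0 : c = 0
      · obtain ⟨e, he⟩ := exists_norm_eq (EuclideanSpace ℝ (Fin (k + 2))) (zero_le_one' ℝ)
        exact ⟨e, he, by simp [hc0]⟩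
      · have : ‖c‖ ≠ 0 := norm_ne_zero_iff.2 hc0
        refine ⟨‖c‖⁻¹ • c, ?_, ?_⟩
        · rw [norm_smul, norm_inv, norm_norm, inv_mul_cancel₀ this]
        · rw [smul_smul, mul_inv_cancel₀ this, one_smul]
    have hN := newton (k + 1) (by omega) hfr μ R₂ hR2 hS hinv e he ‖c‖ (norm_nonneg _) (by linarith)
    have hexp : -((((k + 1 : ℕ) : ℝ) + 1) / 2 - 1) = -((k : ℝ) / 2) := by push_cast; ring
    rw [hexp, pow_sq_rpow R₂ hR2.le] at hN
    rw [← hN]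
    refine integral_congr_ae ?_
    filter_upwards [hS] with x hx
    have hsq : R₂ ^ 2 + 2 * ‖c‖ * inner ℝ e x + ‖c‖ ^ 2 = ‖x + c‖ ^ 2 := by
      rw [norm_add_sq_real, hx]
      conv_rhs => rw [show inner ℝ x c = inner ℝ x (‖c‖ • e) by rw [← hce]]
      rw [inner_smul_right, real_inner_comm]; ring
    rw [hsq, pow_sq_rpow _ (norm_nonneg _)]
  set a := 1 / R₁ ^ k
  set M := 1 / R₂ ^ k with hM
  have hfM : Integrable (fun x => f x - M) μ := hfi.sub (integrable_const _)
  have hfM2 : Integrable (fun x => (f x - M) ^ 2) μ := by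
    refine Integrable.of_bound ((hfm.sub_const M).pow_const 2).aestronglyMeasurable
      ((a + |M|) ^ 2) ?_
    filter_upwards [hfb] with x hx
    rw [norm_pow]
    refine pow_le_pow_left₀ (norm_nonneg _) ?_ 2
    exact (norm_sub_le _ _).trans (add_le_add hx le_rfl)
  have hzero : ∫ x, (f x - M) ∂μ = 0 := by
    rw [integral_sub hfi (integrable_const _), hmean, sub_self]
  have hkey : ∫ x, (a - f x) ^ 2 ∂μ = ∫ x, (a - M) ^ 2 ∂μ + ∫ x, (f x - M) ^ 2 ∂μ := by
    have : ∀ x, (a - f x) ^ 2 = ((a - M) ^ 2 + (f x - M) ^ 2) + (-2 * (a - M)) * (f x - M) := by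
      intro x; ring
    have hi : Integrable (fun x => (a - M) ^ 2 + (f x - M) ^ 2) μ := (integrable_const _).add hfM2
    simp_rw [this]
    rw [integral_add hi (hfM.const_mul _), integral_const_mul, hzero,
      mul_zero, add_zero, integral_add (integrable_const _) hfM2]
  have hnn : 0 ≤ ∫ x, (f x - M) ^ 2 ∂μ := integral_nonneg fun x => sq_nonneg _
  change (∫ x, (a - f x) ^ 2 ∂μ ≥ ∫ x, (a - M) ^ 2 ∂μ) ∧
    (∫ x, (a - f x) ^ 2 ∂μ = ∫ x, (a - M) ^ 2 ∂μ ↔ c = 0)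
  rw [hkey]
  refine ⟨by linarith, ⟨fun h => ?_, fun h => ?_⟩⟩
  · have h0 : ∫ x, (f x - M) ^ 2 ∂μ = 0 := by linarith
    rw [integral_eq_zero_iff_of_nonneg (fun x => sq_nonneg _) hfM2] at h0
    have hin : ∀ᵐ x ∂μ, inner ℝ c x = -(‖c‖ ^ 2 / 2) := by
      filter_upwards [h0, hS, hge] with x hx hxR hxge
      have h2 : f x = M := by
        have : (f x - M) ^ 2 = 0 := hx
        exact sub_eq_zero.1 (pow_eq_zero_iff two_ne_zero |>.1 this)
      simp only [hf, hM, one_div] at h2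
      have h3 : ‖x + c‖ = R₂ :=
        (pow_left_inj₀ (norm_nonneg _) hR2.le (by omega)).1 (inv_injective h2)
      have h4 := norm_add_sq_real x c
      rw [h3, hxR, real_inner_comm] at h4
      linarith
    have hodd : ∫ x, inner ℝ c x ∂μ = 0 := by
      have h5 := (hinv (LinearIsometryEquiv.neg ℝ)).integral_comp
        (LinearIsometryEquiv.neg ℝ).toHomeomorph.measurableEmbedding (fun x => inner ℝ c x)
      simp only [LinearIsometryEquiv.coe_neg, inner_neg_right, integral_neg] at h5
      linarith
    rw [integral_congr_ae hin, integral_const, smul_eq_mul] at hodd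
    have h6 := (mul_eq_zero.1 hodd).resolve_left hμ
    have h7 : ‖c‖ ^ 2 = 0 := by linarith
    exact norm_eq_zero.1 (pow_eq_zero_iff two_ne_zero |>.1 h7)
  · have : ∫ x, (f x - M) ^ 2 ∂μ = 0 := by
      rw [← integral_zero (EuclideanSpace ℝ (Fin (k + 2))) ℝ (μ := μ)]
      refine integral_congr_ae ?_
      filter_upwards [hS] with x hx
      simp [hf, hM, h, hx]
    rw [this, add_zero]
end

section
/- Let 0 < R₁ < R₂, n ≥ 3. Among all domains D = B₂' ∖ closure(B₁) in ℝⁿ, where B₁ is a fixed open ball of radius R₁ and B₂' is an open ball of radius R₂ containing closure(B₁), the first eigenvalue τ₁(D) of the mixed Steklov–Dirichlet problem (Δu = 0 in D, u = 0 on ∂B₁, ∂u/∂ν = τu on ∂B₂') is maximized precisely when B₁ and B₂' are concentric, i.e., τ₁(D) ≤ τ₁(Ω₀) with equality iff D equals the concentric annulus Ω₀. -/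
open MeasureTheory Metric

/-- The domain `B(c,R₂) \ closure B(0,R₁)`. -/
def stekDom (n : ℕ) (R₁ R₂ : ℝ) (c : EuclideanSpace ℝ (Fin n)) : Set (EuclideanSpace ℝ (Fin n)) :=
  Metric.ball c R₂ \ closure (Metric.ball (0 : EuclideanSpace ℝ (Fin n)) R₁)

/-- Variational characterization of the first mixed Steklov–Dirichlet eigenvalue of
`B(c,R₂) \ closure B(0,R₁)`: the infimum of Rayleigh quotients
`(∫_D ‖∇u‖²) / (∫_{∂B(c,R₂)} u²)` over smooth functions vanishing on `∂B(0,R₁)`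
with nonzero boundary term. -/
noncomputable def tau1 (n : ℕ) (R₁ R₂ : ℝ) (c : EuclideanSpace ℝ (Fin n)) : ℝ :=
  sInf { t : ℝ | ∃ u : EuclideanSpace ℝ (Fin n) → ℝ, ContDiff ℝ (⊤ : ℕ∞) u ∧
      (∀ p ∈ Metric.sphere (0 : EuclideanSpace ℝ (Fin n)) R₁, u p = 0) ∧
      (0 < ∫ p in Metric.sphere c R₂, (u p)^2 ∂(μH[((n:ℝ) - 1)])) ∧
      t = (∫ x in stekDom n R₁ R₂ c, ‖gradient u x‖^2) /
            (∫ p in Metric.sphere c R₂, (u p)^2 ∂(μH[((n:ℝ) - 1)])) }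

section helpers
open Set Filter Topology
open scoped ENNReal Pointwise


lemma unif_prod {X : Type*} [MetricSpace X] [SecondCountableTopology X] [MeasurableSpace X]
    [BorelSpace X] (μ ν : Measure X) [IsFiniteMeasure μ] [IsFiniteMeasure ν] (U : Set X)
    (hU : IsOpen U) (r : ℝ) :
    ∫⁻ x in U, ν (U ∩ ball x r) ∂μ = ∫⁻ y in U, μ (U ∩ ball y r) ∂ν := by
  have hW : MeasurableSet {p : X × X | p.1 ∈ U ∧ p.2 ∈ U ∧ dist p.1 p.2 < r} := by
    apply IsOpen.measurableSet
    exact (hU.preimage continuous_fst).inter ((hU.preimage continuous_snd).inter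
      (isOpen_lt (continuous_fst.dist continuous_snd) continuous_const))
  have h1 := Measure.prod_apply (μ := μ) (ν := ν) hW
  rw [Measure.prod_apply_symm hW] at h1
  rw [← lintegral_indicator hU.measurableSet, ← lintegral_indicator hU.measurableSet]
  convert h1.symm using 2
  · ext x
    by_cases hx : x ∈ U
    · simp only [hx, indicator_of_mem]
      congr 1; ext y; simp [hx, dist_comm]
    · simp [hx]
  · ext x
    by_cases hx : x ∈ U
    · simp only [hx, indicator_of_mem]
      congr 1; ext y; simp [hx]
    · simp [hx]

lemma unif_le {X : Type*} [MetricSpace X] [SecondCountableTopology X] [MeasurableSpace X]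
    [BorelSpace X] (μ ν : Measure X) [IsFiniteMeasure μ] [IsFiniteMeasure ν] (a b : ℝ → ℝ≥0∞)
    (ha : ∀ x r, μ (ball x r) = a r) (hb : ∀ x r, ν (ball x r) = b r)
    (hb0 : ∀ r, 0 < r → b r ≠ 0) (hbt : ∀ r, b r ≠ ∞) (U : Set X) (hU : IsOpen U) :
    ν univ * μ U ≤ μ univ * ν U := by
  have hab : ∀ r, b r * μ univ = a r * ν univ := by
    intro r
    have := unif_prod μ ν univ isOpen_univ r
    simpa [ha, hb] using this
  have hr : ∀ k : ℕ, (0:ℝ) < 1 / ((k:ℝ) + 1) := fun k => by positivity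
  have hm : ∀ (r : ℝ), Measurable fun x => ν (U ∩ ball x r) := by
    intro r
    have hW : MeasurableSet {p : X × X | p.2 ∈ U ∧ dist p.2 p.1 < r} := by
      apply IsOpen.measurableSet
      exact ((hU.preimage continuous_snd).inter
        (isOpen_lt (continuous_snd.dist continuous_fst) continuous_const))
    exact measurable_measure_prodMk_left hW
  have key : μ U ≤ liminf (fun k : ℕ => ∫⁻ x in U, ν (U ∩ ball x (1/((k:ℝ)+1))) /
      b (1/((k:ℝ)+1)) ∂μ) atTop := by
    refine le_trans ?_ (lintegral_liminf_le fun k => (hm _).div_const _)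
    rw [← setLIntegral_one]
    apply setLIntegral_mono' hU.measurableSet
    intro x hx
    obtain ⟨ε, hε, hεU⟩ := Metric.isOpen_iff.1 hU x hx
    have ht : Tendsto (fun k : ℕ => 1 / ((k:ℝ)+1)) atTop (𝓝 0) :=
      tendsto_one_div_add_atTop_nhds_zero_nat
    refine le_liminf_of_le (by isBoundedDefault) ?_
    filter_upwards [ht.eventually (gt_mem_nhds hε)] with k hk
    rw [inter_eq_self_of_subset_right ((ball_subset_ball hk.le).trans hεU), hb,
      ENNReal.div_self (hb0 _ (hr k)) (hbt _)]
  have h2 : ∀ k : ℕ, ν univ * ∫⁻ x in U, ν (U ∩ ball x (1/((k:ℝ)+1))) /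
      b (1/((k:ℝ)+1)) ∂μ ≤ μ univ * ν U := by
    intro k
    set r := 1/((k:ℝ)+1) with hrdef
    have : ∫⁻ x in U, ν (U ∩ ball x r) / b r ∂μ ≤ a r * ν U / b r := by
      simp only [div_eq_mul_inv]
      rw [lintegral_mul_const _ (hm _), unif_prod μ ν U hU r]
      gcongr
      calc ∫⁻ y in U, μ (U ∩ ball y r) ∂ν ≤ ∫⁻ y in U, a r ∂ν := by
            apply lintegral_mono
            intro y
            rw [← ha y r]; exact measure_mono inter_subset_right
        _ = _ := by simp
    calc _ ≤ ν univ * (a r * ν U / b r) := by gcongr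
      _ = (a r * ν univ) * ν U / b r := by simp only [div_eq_mul_inv]; ring
      _ = (b r * (b r)⁻¹) * (μ univ * ν U) := by
        rw [← hab]; simp only [div_eq_mul_inv]; ring
      _ = _ := by rw [ENNReal.mul_inv_cancel (hb0 _ (hr k)) (hbt _), one_mul]
  by_cases hν : ν univ = 0
  · simp [hν]
  rw [mul_comm]
  rw [← ENNReal.le_div_iff_mul_le (Or.inl hν) (Or.inl (measure_ne_top _ _))]
  refine key.trans ?_
  refine (liminf_le_liminf (v := fun _ => μ univ * ν U / ν univ) (Eventually.of_forall fun k => ?_)).trans (by simp)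
  rw [ENNReal.le_div_iff_mul_le (Or.inl hν) (Or.inl (measure_ne_top _ _)), mul_comm]
  exact h2 k

lemma unif_eq {X : Type*} [MetricSpace X] [SecondCountableTopology X] [MeasurableSpace X]
    [BorelSpace X] (μ ν : Measure X) [IsFiniteMeasure μ] [IsFiniteMeasure ν] (a b : ℝ → ℝ≥0∞)
    (ha : ∀ x r, μ (ball x r) = a r) (hb : ∀ x r, ν (ball x r) = b r)
    (ha0 : ∀ r, 0 < r → a r ≠ 0) (hat : ∀ r, a r ≠ ∞)
    (hb0 : ∀ r, 0 < r → b r ≠ 0) (hbt : ∀ r, b r ≠ ∞) :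
    ν univ • μ = μ univ • ν := by
  have : IsFiniteMeasure (ν univ • μ) := ⟨by
    simp only [Measure.smul_apply, smul_eq_mul]; exact ENNReal.mul_lt_top (measure_lt_top _ _) (measure_lt_top _ _)⟩
  refine ext_of_generate_finite {s | IsOpen s} (BorelSpace.measurable_eq) isPiSystem_isOpen ?_ ?_
  · intro U hU
    exact le_antisymm (unif_le μ ν a b ha hb hb0 hbt U hU) (unif_le ν μ b a hb ha ha0 hat U hU)
  · simp [mul_comm]

/-- balls in a compact space with homogeneous nonzero measure have positive measure -/
lemma unif_pos {X : Type*} [MetricSpace X] [CompactSpace X] [MeasurableSpace X]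
    [BorelSpace X] (μ : Measure X) (h : ∀ x y r, μ (ball x r) = μ (ball y r)) (hμ : μ univ ≠ 0)
    (x : X) (r : ℝ) (hr : 0 < r) : μ (ball x r) ≠ 0 := by
  intro h0
  obtain ⟨t, -, ht⟩ := isCompact_univ.elim_finite_subcover_image (b := univ) (c := fun y : X => ball y r)
    (fun _ _ => isOpen_ball) (fun y _ => by simpa using ⟨y, by simpa using hr⟩)
  apply hμ
  refine measure_mono_null ht.2 ?_
  rw [measure_biUnion_null_iff ht.1.countable]
  intro y _
  rw [h y x, h0]

lemma unif_fin {X : Type*} [MetricSpace X] [CompactSpace X] [MeasurableSpace X]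
    [BorelSpace X] (μ : Measure X) (h : ∀ x y r, μ (ball x r) = μ (ball y r))
    (x : X) (r : ℝ) (hr : 0 < r) (hx : μ (ball x r) ≠ ∞) : μ univ < ∞ := by
  obtain ⟨t, -, ht⟩ := isCompact_univ.elim_finite_subcover_image (b := univ) (c := fun y : X => ball y r)
    (fun _ _ => isOpen_ball) (fun y _ => by simpa using ⟨y, by simpa using hr⟩)
  refine (measure_mono ht.2).trans_lt ?_
  refine measure_biUnion_lt_top ht.1 ?_
  intro y _
  rw [h y x]; exact hx.lt_top


lemma haus_ortho_haar {d : ℕ} (v : EuclideanSpace ℝ (Fin (d+1))) (hv : v ≠ 0) :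
    (μH[(d:ℝ)] : Measure (ℝ ∙ v)ᗮ).IsAddHaarMeasure := by
  have : Fact (Module.finrank ℝ (EuclideanSpace ℝ (Fin (d+1))) = d + 1) := ⟨by simp⟩
  have h : Module.finrank ℝ (ℝ ∙ v)ᗮ = d := Submodule.finrank_orthogonal_span_singleton hv
  have h2 := isAddHaarMeasure_hausdorffMeasure (E := (ℝ ∙ v)ᗮ)
  rwa [h] at h2

lemma sphere_haus_pos {d : ℕ} (R : ℝ) (hR : 0 < R) :
    μH[(d:ℝ)] (sphere (0 : EuclideanSpace ℝ (Fin (d+1))) R) ≠ 0 := by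
  let v : EuclideanSpace ℝ (Fin (d+1)) := EuclideanSpace.single 0 1
  have hv1 : ‖v‖ = 1 := by simp [v]
  have hv : v ≠ 0 := by intro h; simp [h] at hv1
  have := haus_ortho_haar v hv
  intro h0
  have h1 := hausdorffMeasure_orthogonalProjectionOnto_le (ℝ ∙ v)ᗮ (d:ℝ)
    (sphere (0 : EuclideanSpace ℝ (Fin (d+1))) R) (by positivity)
  rw [h0] at h1
  have h2 : ball (0 : (ℝ ∙ v)ᗮ) R ⊆ (ℝ ∙ v)ᗮ.orthogonalProjectionOnto '' sphere 0 R := by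
    intro w hw
    have hw' : ‖w‖ < R := by simpa using hw
    have hvw : inner ℝ (w : EuclideanSpace ℝ (Fin (d+1))) v = 0 :=
      Submodule.mem_orthogonal_singleton_iff_inner_left.1 w.2
    refine ⟨(w : EuclideanSpace ℝ (Fin (d+1))) + Real.sqrt (R^2 - ‖w‖^2) • v, ?_, ?_⟩
    · rw [mem_sphere_zero_iff_norm]
      have hh : ‖(w : EuclideanSpace ℝ (Fin (d+1))) + Real.sqrt (R^2 - ‖w‖^2) • v‖^2 = R^2 := by
        rw [norm_add_sq_real, inner_smul_right, hvw, norm_smul, hv1, Real.norm_of_nonneg (Real.sqrt_nonneg _), mul_one,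
          Real.sq_sqrt (by nlinarith [norm_nonneg w])]
        simp
      exact (pow_left_inj₀ (norm_nonneg _) hR.le two_ne_zero).1 hh
    · rw [map_add, Submodule.orthogonalProjectionOnto_mem_subspace_eq_self, map_smul,
        Submodule.orthogonalProjectionOnto_orthogonalComplement_singleton_eq_zero]
      simp
  have h3 := (measure_mono h2).trans h1
  exact (isOpen_ball.measure_pos μH[(d:ℝ)] ⟨(0 : (ℝ ∙ v)ᗮ), by simpa using hR⟩).not_ge h3

lemma sphere_haus_fin_loc {d : ℕ} (R : ℝ) (hR : 0 < R) :
    ∃ p ∈ sphere (0 : EuclideanSpace ℝ (Fin (d+1))) R, ∃ r, 0 < r ∧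
      μH[(d:ℝ)] (ball p r ∩ sphere (0 : EuclideanSpace ℝ (Fin (d+1))) R) ≠ ∞ := by
  let v : EuclideanSpace ℝ (Fin (d+1)) := EuclideanSpace.single 0 1
  have hv1 : ‖v‖ = 1 := by simp [v]
  have hv : v ≠ 0 := by intro h; simp [h] at hv1
  have := haus_ortho_haar v hv
  let F : (ℝ ∙ v)ᗮ → EuclideanSpace ℝ (Fin (d+1)) := fun w => R • stereoInvFunAux v w
  have hF : ContDiff ℝ 1 F := by
    have h1 : ContDiff ℝ 1 (stereoInvFunAux v) := contDiff_stereoInvFunAux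
    exact (h1.comp ((ℝ ∙ v)ᗮ.subtypeL.contDiff)).const_smul R
  obtain ⟨K, t, ht, hK⟩ := (hF.contDiffAt (x := 0)).exists_lipschitzOnWith
  obtain ⟨δ, hδ, hδt⟩ := Metric.mem_nhds_iff.1 ht
  have hfin : μH[(d:ℝ)] (F '' ball 0 δ) < ∞ := by
    refine ((hK.mono hδt).hausdorffMeasure_image_le (by positivity)).trans_lt ?_
    refine ENNReal.mul_lt_top (by simp) measure_ball_lt_top
  have hO := (isOpenEmbedding_stereographic_symm hv1).isOpenMap (ball 0 δ) isOpen_ball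
  have hp : (stereographic hv1).symm 0 ∈ (stereographic hv1).symm '' ball 0 δ := ⟨0, by simpa using hδ, rfl⟩
  obtain ⟨ε, hε, hεO⟩ := Metric.isOpen_iff.1 hO _ hp
  set p := (stereographic hv1).symm 0
  refine ⟨R • (p : EuclideanSpace ℝ (Fin (d+1))), by simp [norm_smul, hR.le], R * ε, by positivity, ?_⟩
  refine ((measure_mono ?_).trans_lt hfin).ne
  rintro x ⟨hx1, hx2⟩
  have hxn : ‖x‖ = R := by simpa using hx2
  have hq : R⁻¹ • x ∈ sphere (0 : EuclideanSpace ℝ (Fin (d+1))) 1 := by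
    simp [norm_smul, hxn, abs_of_pos hR, hR.ne']
  have : (⟨R⁻¹ • x, hq⟩ : sphere (0 : EuclideanSpace ℝ (Fin (d+1))) 1) ∈ ball p ε := by
    rw [mem_ball, Subtype.dist_eq]
    rw [mem_ball] at hx1
    have : x = R • (R⁻¹ • x) := by rw [smul_inv_smul₀ hR.ne']
    rw [this, dist_smul₀, Real.norm_of_nonneg hR.le] at hx1
    exact lt_of_mul_lt_mul_left hx1 hR.le
  obtain ⟨w, hw, hwx⟩ := hεO this
  refine ⟨w, hw, ?_⟩
  have h4 : ((stereographic hv1).symm w : EuclideanSpace ℝ (Fin (d+1))) = R⁻¹ • x := by rw [hwx]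
  have h5 : ((stereographic hv1).symm w : EuclideanSpace ℝ (Fin (d+1))) = stereoInvFunAux v w := rfl
  simp only [F]
  rw [← h5, h4, smul_inv_smul₀ hR.ne']

lemma exists_isom {d : ℕ} {R : ℝ} {x y : EuclideanSpace ℝ (Fin (d+1))} (hx : ‖x‖ = R) (hy : ‖y‖ = R) :
    ∃ L : EuclideanSpace ℝ (Fin (d+1)) ≃ₗᵢ[ℝ] EuclideanSpace ℝ (Fin (d+1)), L x = y :=
  ⟨_, Submodule.reflection_sub (hx.trans hy.symm)⟩

lemma sphere_haus_hom {d : ℕ} (R : ℝ) (x y : sphere (0 : EuclideanSpace ℝ (Fin (d+1))) R) (r : ℝ) :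
    μH[(d:ℝ)] (ball x r) = μH[(d:ℝ)] (ball y r) := by
  have hi : Isometry (Subtype.val : sphere (0 : EuclideanSpace ℝ (Fin (d+1))) R → _) := isometry_subtype_coe
  rw [← hi.hausdorffMeasure_image (Or.inl (by positivity)), ← hi.hausdorffMeasure_image (Or.inl (by positivity)) (ball y r)]
  rw [Subtype.image_ball, Subtype.image_ball]
  obtain ⟨L, hL⟩ := exists_isom (x := x.1) (y := y.1) (R := R) (by simp) (by simp)
  rw [← L.isometry.hausdorffMeasure_image (Or.inl (by positivity)), image_inter L.injective, L.image_ball, hL]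
  congr 2
  have := L.image_sphere 0 R
  rw [map_zero] at this
  exact this

lemma toSphere_hom {d : ℕ} (R : ℝ) (x y : sphere (0 : EuclideanSpace ℝ (Fin (d+1))) R) (r : ℝ) :
    (volume : Measure (EuclideanSpace ℝ (Fin (d+1)))).toSphere {θ | dist (R • (θ : EuclideanSpace ℝ (Fin (d+1)))) x < r} =
    (volume : Measure (EuclideanSpace ℝ (Fin (d+1)))).toSphere {θ | dist (R • (θ : EuclideanSpace ℝ (Fin (d+1)))) y < r} := by
  have hm : ∀ z : EuclideanSpace ℝ (Fin (d+1)), MeasurableSet {θ : sphere (0 : EuclideanSpace ℝ (Fin (d+1))) 1 | dist (R • (θ : EuclideanSpace ℝ (Fin (d+1)))) z < r} := fun z =>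
    (isOpen_lt (by fun_prop) continuous_const).measurableSet
  rw [Measure.toSphere_apply' _ (hm _), Measure.toSphere_apply' _ (hm _)]
  obtain ⟨L, hL⟩ := exists_isom (x := x.1) (y := y.1) (R := R) (by simp) (by simp)
  congr 1
  symm
  rw [← (LinearIsometryEquiv.measurePreserving L).measure_preimage_emb L.toHomeomorph.measurableEmbedding]
  congr 1
  ext z
  simp only [mem_preimage, Set.mem_smul, mem_image, mem_ofPred_eq, Subtype.exists, exists_and_right, exists_eq_right]
  constructor
  · rintro ⟨a, ha, w, ⟨hw, hd⟩, hz⟩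
    refine ⟨a, ha, L.symm w, ⟨by simpa using hw, ?_⟩, ?_⟩
    · rw [← L.dist_map, map_smul, hL, L.apply_symm_apply]; exact hd
    · rw [← map_smul, hz, L.symm_apply_apply]
  · rintro ⟨a, ha, w, ⟨hw, hd⟩, hz⟩
    refine ⟨a, ha, L w, ⟨by simpa using hw, ?_⟩, by rw [← map_smul, hz]⟩
    rw [← hL, ← map_smul, L.dist_map]; exact hd

lemma sphere_const {d : ℕ} (R : ℝ) (hR : 0 < R) : ∃ k : ℝ, 0 < k ∧
    ∀ (c : EuclideanSpace ℝ (Fin (d+1))) (f : EuclideanSpace ℝ (Fin (d+1)) → ℝ), Continuous f →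
      ∫ p in sphere c R, f p ∂μH[(d:ℝ)] = k * ∫ θ : sphere (0 : EuclideanSpace ℝ (Fin (d+1))) 1,
        f (c + R • (θ : EuclideanSpace ℝ (Fin (d+1)))) ∂(volume : Measure (EuclideanSpace ℝ (Fin (d+1)))).toSphere := by
  set σ := (volume : Measure (EuclideanSpace ℝ (Fin (d+1)))).toSphere with hσ
  let g : sphere (0 : EuclideanSpace ℝ (Fin (d+1))) 1 → sphere (0 : EuclideanSpace ℝ (Fin (d+1))) R :=
    fun θ => ⟨R • θ, by simp [norm_smul, hR.le]⟩
  have hg : Continuous g := by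
    apply Continuous.subtype_mk; fun_prop
  set ν := σ.map g with hν
  set μ : Measure (sphere (0 : EuclideanSpace ℝ (Fin (d+1))) R) := μH[(d:ℝ)] with hμ
  have hi : Isometry (Subtype.val : sphere (0 : EuclideanSpace ℝ (Fin (d+1))) R → _) := isometry_subtype_coe
  have hμu : μ univ ≠ 0 := by
    rw [hμ, ← hi.hausdorffMeasure_image (Or.inl (by positivity)), image_univ, Subtype.range_coe]
    exact sphere_haus_pos R hR
  obtain ⟨p, hp, r, hr, hpr⟩ := sphere_haus_fin_loc (d := d) R hR
  have hμf : μ univ < ∞ := by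
    refine unif_fin μ (sphere_haus_hom R) ⟨p, hp⟩ r hr ?_
    rw [hμ, ← hi.hausdorffMeasure_image (Or.inl (by positivity)), Subtype.image_ball]
    exact hpr
  have hνh : ∀ x y r, ν (ball x r) = ν (ball y r) := by
    intro x y r
    rw [hν, Measure.map_apply hg.measurable measurableSet_ball, Measure.map_apply hg.measurable measurableSet_ball]
    exact toSphere_hom R x y r
  have hνu : ν univ ≠ 0 := by
    rw [hν, Measure.map_apply hg.measurable MeasurableSet.univ, preimage_univ]
    rw [hσ, Measure.measure_univ_ne_zero]
    exact Measure.toSphere_ne_zero _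
  have : IsFiniteMeasure μ := ⟨hμf⟩
  have : IsFiniteMeasure ν := by rw [hν]; infer_instance
  have key := unif_eq μ ν (fun r => μ (ball ⟨p, hp⟩ r)) (fun r => ν (ball ⟨p, hp⟩ r))
    (fun x r => sphere_haus_hom R _ _ r) (fun x r => hνh _ _ r)
    (fun r hr => unif_pos μ (sphere_haus_hom R) hμu _ r hr) (fun r => measure_ne_top _ _)
    (fun r hr => unif_pos ν hνh hνu _ r hr) (fun r => measure_ne_top _ _)
  have hνt : ν univ ≠ ∞ := measure_ne_top _ _
  have key2 : μ = (μ univ / ν univ) • ν := by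
    rw [ENNReal.div_eq_inv_mul, mul_smul, ← key, smul_smul, ENNReal.inv_mul_cancel hνu hνt, one_smul]
  refine ⟨(μ univ / ν univ).toReal, ?_, ?_⟩
  · exact ENNReal.toReal_pos (ENNReal.div_pos hμu hνt).ne' (ENNReal.div_lt_top hμf.ne hνu).ne
  intro c f hf
  let j : sphere (0 : EuclideanSpace ℝ (Fin (d+1))) R → EuclideanSpace ℝ (Fin (d+1)) := fun x => c + x
  have hj : Isometry j := (IsometryEquiv.addLeft c).isometry.comp hi
  have hjr : range j = sphere c R := by
    ext z
    simp only [j, mem_range, Subtype.exists, mem_sphere_iff_norm]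
    constructor
    · rintro ⟨a, ha, rfl⟩; simpa using ha
    · intro h; exact ⟨z - c, by simpa using h, by simp⟩
  have h1 := hj.map_hausdorffMeasure (d := (d:ℝ)) (Or.inl (by positivity))
  rw [hjr] at h1
  rw [← h1, integral_map hj.continuous.measurable.aemeasurable hf.aestronglyMeasurable]
  change ∫ x, f (j x) ∂μ = _
  rw [key2, integral_smul_measure, ← key2]
  have h2 : ∫ x, f (j x) ∂ν = ∫ θ, f (j (g θ)) ∂σ :=
    integral_map hg.measurable.aemeasurable (hf.comp hj.continuous).aestronglyMeasurable
  rw [h2]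
  rfl


lemma volumeIoiPow_map (d : ℕ) : (Measure.volumeIoiPow d).map Subtype.val =
    ((volume : Measure ℝ).restrict (Ioi 0)).withDensity (fun r => ENNReal.ofReal (r ^ d)) := by
  ext s hs
  rw [Measure.map_apply measurable_subtype_coe hs, Measure.volumeIoiPow,
    withDensity_apply _ (measurable_subtype_coe hs), withDensity_apply _ hs,
    ← map_comap_subtype_coe measurableSet_Ioi, Measure.restrict_map measurable_subtype_coe hs,
    (MeasurableEmbedding.subtype_coe measurableSet_Ioi).lintegral_map]

lemma polar_map (d : ℕ) :
    Measure.map (fun p : sphere (0 : EuclideanSpace ℝ (Fin (d+1))) 1 × ℝ => p.2 • (p.1 : EuclideanSpace ℝ (Fin (d+1))))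
    (((volume : Measure (EuclideanSpace ℝ (Fin (d+1)))).toSphere.prod (volume.restrict (Ioi 0))).withDensity
      (fun p => ENNReal.ofReal (p.2 ^ d))) = volume := by
  rw [← prod_withDensity_right (g := fun r : ℝ => ENNReal.ofReal (r ^ d)) (by fun_prop), ← volumeIoiPow_map]
  have h0 := (volume : Measure (EuclideanSpace ℝ (Fin (d+1)))).measurePreserving_homeomorphUnitSphereProd
  have hd : Module.finrank ℝ (EuclideanSpace ℝ (Fin (d+1))) - 1 = d := by simp
  rw [hd] at h0
  have h1 : (volume : Measure (EuclideanSpace ℝ (Fin (d+1)))).toSphere.prod ((Measure.volumeIoiPow d).map Subtype.val)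
     = ((volume : Measure (EuclideanSpace ℝ (Fin (d+1)))).toSphere.prod (Measure.volumeIoiPow d)).map
        (Prod.map id Subtype.val) := by
    have hsf : SigmaFinite ((Measure.volumeIoiPow d).map Subtype.val) :=
      (MeasurableEmbedding.subtype_coe measurableSet_Ioi).sigmaFinite_map
    rw [← Measure.map_prod_map _ _ measurable_id measurable_subtype_coe, Measure.map_id]
  rw [h1, ← h0.map_eq, Measure.map_map (by fun_prop) h0.measurable, Measure.map_map]
  rotate_left
  · fun_prop
  · exact (by fun_prop : Measurable (Prod.map id Subtype.val)).comp h0.measurable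
  have h2 : ((fun p : sphere (0 : EuclideanSpace ℝ (Fin (d+1))) 1 × ℝ => p.2 • (p.1 : EuclideanSpace ℝ (Fin (d+1)))) ∘
      (Prod.map id Subtype.val) ∘ (homeomorphUnitSphereProd (EuclideanSpace ℝ (Fin (d+1))))) = Subtype.val := by
    ext1 x
    have hx : (x : EuclideanSpace ℝ (Fin (d+1))) ≠ 0 := x.2
    simp [hx]
  rw [h2, map_comap_subtype_coe (measurableSet_singleton _).compl, restrict_compl_singleton]

lemma polar (d : ℕ) (f : EuclideanSpace ℝ (Fin (d+1)) → ℝ) (hf : Integrable f) :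
    Integrable (fun p : sphere (0 : EuclideanSpace ℝ (Fin (d+1))) 1 × ℝ => p.2 ^ d * f (p.2 • (p.1 : EuclideanSpace ℝ (Fin (d+1)))))
      ((volume : Measure (EuclideanSpace ℝ (Fin (d+1)))).toSphere.prod (volume.restrict (Ioi 0))) ∧
    ∫ x, f x = ∫ p, p.2 ^ d * f (p.2 • (p.1 : EuclideanSpace ℝ (Fin (d+1))))
      ∂((volume : Measure (EuclideanSpace ℝ (Fin (d+1)))).toSphere.prod (volume.restrict (Ioi 0))) := by
  have hm := polar_map d
  have hΦ : Measurable (fun p : sphere (0 : EuclideanSpace ℝ (Fin (d+1))) 1 × ℝ => p.2 • (p.1 : EuclideanSpace ℝ (Fin (d+1)))) := by fun_prop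
  have hpos : ∀ᵐ p ∂((volume : Measure (EuclideanSpace ℝ (Fin (d+1)))).toSphere.prod (volume.restrict (Ioi (0:ℝ)))), 0 < p.2 :=
    Measure.quasiMeasurePreserving_snd.ae (ae_restrict_mem measurableSet_Ioi)
  constructor
  · have h1 : Integrable f (Measure.map _ _) := hm.symm ▸ hf
    rw [integrable_map_measure h1.1 hΦ.aemeasurable, integrable_withDensity_iff_integrable_smul' (by fun_prop) (by simp)] at h1
    refine h1.congr ?_
    filter_upwards [hpos] with p hp
    simp [ENNReal.toReal_ofReal (pow_nonneg hp.le d)]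
  · have h1 : AEStronglyMeasurable f (Measure.map _ _) := hm.symm ▸ hf.1
    conv_lhs => rw [← hm]
    rw [integral_map hΦ.aemeasurable h1, integral_withDensity_eq_integral_toReal_smul (by fun_prop) (by simp)]
    refine integral_congr_ae ?_
    filter_upwards [hpos] with p hp
    simp [ENNReal.toReal_ofReal (pow_nonneg hp.le d)]

lemma oneD {d : ℕ} {R₁ R₂ : ℝ} (h1 : 0 < R₁) (h12 : R₁ < R₂) (v v' g : ℝ → ℝ)
    (hv : ∀ r, HasDerivAt v (v' r) r) (hc : Continuous v') (hg : Continuous g) (hvg : ∀ r, v' r ^ 2 ≤ g r)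
    (h0 : v R₁ = 0) (L : ℝ) (hL : L = ∫ r in R₁..R₂, (r ^ d)⁻¹) (hL0 : 0 < L) :
    L⁻¹ * v R₂ ^ 2 ≤ ∫ r in R₁..R₂, r ^ d * g r := by
  set l := v R₂ / L
  have hIntg : ContinuousOn (fun r : ℝ => (r ^ d)⁻¹) (uIcc R₁ R₂) := by
    apply ContinuousOn.inv₀ (by fun_prop)
    intro r hr
    rw [uIcc_of_le h12.le] at hr
    have : 0 < r := h1.trans_le hr.1
    positivity
  have e1 : ∫ r in R₁..R₂, v' r = v R₂ := by
    rw [intervalIntegral.integral_eq_sub_of_hasDerivAt (fun r _ => hv r) (hc.intervalIntegrable _ _), h0, sub_zero]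
  have e2 : ∫ r in R₁..R₂, (2 * l * v' r - l^2 * (r ^ d)⁻¹) = 2 * l * v R₂ - l^2 * L := by
    rw [intervalIntegral.integral_sub ((hc.const_mul _ |>.intervalIntegrable _ _)) ((hIntg.const_mul _).intervalIntegrable),
      intervalIntegral.integral_const_mul, intervalIntegral.integral_const_mul, e1, hL]
  have e3 : L⁻¹ * v R₂ ^ 2 = 2 * l * v R₂ - l^2 * L := by
    simp only [l]; field_simp; ring
  rw [e3, ← e2]
  apply intervalIntegral.integral_mono_on h12.le
  · exact (hc.const_mul _ |>.continuousOn.sub (hIntg.const_mul _)).intervalIntegrable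
  · exact Continuous.intervalIntegrable (by fun_prop) _ _
  · intro r hr
    have hr0 : 0 < r := h1.trans_le hr.1
    have hp : 0 < r ^ d := by positivity
    have : 2 * l * v' r - l^2 * (r ^ d)⁻¹ ≤ r ^ d * v' r ^ 2 := by
      have : r ^ d * v' r ^ 2 - (2 * l * v' r - l^2 * (r ^ d)⁻¹) = (r ^ d)⁻¹ * (r ^ d * v' r - l)^2 := by
        field_simp; ring
      have h3 : 0 ≤ (r ^ d)⁻¹ * (r ^ d * v' r - l)^2 := by positivity
      linarith
    exact this.trans (mul_le_mul_of_nonneg_left (hvg r) hp.le)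

lemma lower {d : ℕ} {R₁ R₂ : ℝ} (h1 : 0 < R₁) (h12 : R₁ < R₂) (u : EuclideanSpace ℝ (Fin (d+1)) → ℝ)
    (hu : ContDiff ℝ 1 u) (h0 : ∀ p ∈ sphere (0 : EuclideanSpace ℝ (Fin (d+1))) R₁, u p = 0)
    (L : ℝ) (hL : L = ∫ r in R₁..R₂, (r ^ d)⁻¹) (hL0 : 0 < L) :
    L⁻¹ * ∫ θ : sphere (0 : EuclideanSpace ℝ (Fin (d+1))) 1, u (R₂ • (θ : EuclideanSpace ℝ (Fin (d+1)))) ^ 2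
        ∂(volume : Measure (EuclideanSpace ℝ (Fin (d+1)))).toSphere ≤
      ∫ x in ball (0 : EuclideanSpace ℝ (Fin (d+1))) R₂ \ closedBall 0 R₁, ‖gradient u x‖^2 := by
  have hgc : Continuous fun x => ‖gradient u x‖^2 := by
    have : Continuous (fun x => fderiv ℝ u x) := hu.continuous_fderiv one_ne_zero
    unfold gradient
    fun_prop
  have hAm : MeasurableSet (ball (0 : EuclideanSpace ℝ (Fin (d+1))) R₂ \ closedBall 0 R₁) :=
    measurableSet_ball.diff measurableSet_closedBall
  rw [← integral_indicator hAm]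
  have hIntg : Integrable (indicator (ball (0 : EuclideanSpace ℝ (Fin (d+1))) R₂ \ closedBall 0 R₁) fun x => ‖gradient u x‖^2) := by
    rw [integrable_indicator_iff hAm]
    exact (hgc.continuousOn.integrableOn_compact (isCompact_closedBall 0 R₂)).mono_set (sdiff_subset.trans ball_subset_closedBall)
  obtain ⟨hi, he⟩ := polar d _ hIntg
  rw [he, integral_prod _ hi, ← integral_const_mul]
  apply integral_mono
  · apply Integrable.const_mul
    have hc : Continuous fun θ : sphere (0 : EuclideanSpace ℝ (Fin (d+1))) 1 => u (R₂ • (θ : EuclideanSpace ℝ (Fin (d+1)))) ^ 2 := by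
      have := hu.continuous; fun_prop
    exact hc.integrable_of_hasCompactSupport (HasCompactSupport.of_compactSpace _)
  · exact hi.integral_prod_left
  intro θ
  have hθ : ‖(θ : EuclideanSpace ℝ (Fin (d+1)))‖ = 1 := by simp
  have e : ∫ r in Ioi (0:ℝ), r ^ d * indicator (ball (0 : EuclideanSpace ℝ (Fin (d+1))) R₂ \ closedBall 0 R₁) (fun x => ‖gradient u x‖^2) (r • (θ : EuclideanSpace ℝ (Fin (d+1))))
      = ∫ r in R₁..R₂, r ^ d * ‖gradient u (r • (θ : EuclideanSpace ℝ (Fin (d+1))))‖^2 := by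
    rw [intervalIntegral.integral_of_le h12.le, integral_Ioc_eq_integral_Ioo, ← integral_indicator measurableSet_Ioi, ← integral_indicator measurableSet_Ioo]
    congr 1
    ext r
    by_cases hr : r ∈ Ioo R₁ R₂
    · have hr0 : 0 < r := h1.trans hr.1
      rw [indicator_of_mem (mem_Ioi.2 hr0), indicator_of_mem hr, indicator_of_mem]
      simp [norm_smul, abs_of_pos hr0, hr.1, hr.2]
    · rw [indicator_of_notMem hr]
      by_cases hr0 : 0 < r
      · rw [indicator_of_mem (mem_Ioi.2 hr0), indicator_of_notMem, mul_zero]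
        simp only [Set.mem_sdiff, mem_ball_zero_iff, mem_closedBall_zero_iff, norm_smul, Real.norm_eq_abs, abs_of_pos hr0, hθ, mul_one, not_le]
        exact fun h => hr ⟨h.2, h.1⟩
      · rw [indicator_of_notMem (by simpa using hr0)]
  simp only
  rw [e]
  refine oneD h1 h12 (fun r => u (r • (θ : EuclideanSpace ℝ (Fin (d+1))))) (fun r => inner ℝ (gradient u (r • (θ : EuclideanSpace ℝ (Fin (d+1))))) (θ : EuclideanSpace ℝ (Fin (d+1)))) _ ?_ ?_ ?_ ?_ ?_ L hL hL0
  · intro r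
    have h3 : HasDerivAt (fun r : ℝ => r • (θ : EuclideanSpace ℝ (Fin (d+1)))) (θ : EuclideanSpace ℝ (Fin (d+1))) r := by
      simpa using (hasDerivAt_id r).smul_const (θ : EuclideanSpace ℝ (Fin (d+1)))
    have h5 : (fderiv ℝ u (r • (θ : EuclideanSpace ℝ (Fin (d+1))))) θ = inner ℝ (gradient u (r • (θ : EuclideanSpace ℝ (Fin (d+1))))) (θ : EuclideanSpace ℝ (Fin (d+1))) := by
      simp [gradient]
    rw [← h5]
    exact ((hu.differentiable one_ne_zero) (r • (θ : EuclideanSpace ℝ (Fin (d+1))))).hasFDerivAt.comp_hasDerivAt r h3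
  · have : Continuous (fun x => fderiv ℝ u x) := hu.continuous_fderiv one_ne_zero
    unfold gradient
    fun_prop
  · exact hgc.comp (by fun_prop)
  · intro r
    rw [sq_le_sq, abs_norm]
    exact (abs_real_inner_le_norm _ _).trans (by rw [hθ, mul_one])
  · apply h0; simp [norm_smul, h1.le]


lemma hasFDerivAt_nrm {n : ℕ} {y : EuclideanSpace ℝ (Fin n)} (hy : y ≠ 0) :
    HasFDerivAt (fun z : EuclideanSpace ℝ (Fin n) => ‖z‖) (‖y‖⁻¹ • innerSL ℝ y) y := by
  have h1 : HasFDerivAt (fun z : EuclideanSpace ℝ (Fin n) => ‖z‖^2) (2 • innerSL ℝ y) y :=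
    (hasStrictFDerivAt_norm_sq y).hasFDerivAt
  have h2 := h1.sqrt (by simpa using hy)
  simp only [Real.sqrt_sq (norm_nonneg _)] at h2
  have hy' : ‖y‖ ≠ 0 := by simpa using hy
  have e : ‖y‖⁻¹ • innerSL ℝ y = (1 / (2 * ‖y‖)) • 2 • (innerSL ℝ) y := by
    ext z
    simp
    field_simp
  rw [e]
  exact h2

lemma hasFDerivAt_nrm_pow_inv {n k : ℕ} {y : EuclideanSpace ℝ (Fin n)} (hy : y ≠ 0) :
    HasFDerivAt (fun z : EuclideanSpace ℝ (Fin n) => (‖z‖^k)⁻¹) ((-(k:ℝ) * (‖y‖^(k+2))⁻¹) • innerSL ℝ y) y := by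
  have hy' : ‖y‖ ≠ 0 := by simpa using hy
  have h1 : HasDerivAt (fun r : ℝ => (r^k)⁻¹) (-(k * ‖y‖^(k-1)) / (‖y‖^k)^2) ‖y‖ := by
    simpa using (hasDerivAt_pow k ‖y‖).fun_inv (by positivity)
  have h2 := h1.comp_hasFDerivAt y (hasFDerivAt_nrm hy)
  have e : (-(k:ℝ) * (‖y‖^(k+2))⁻¹) • innerSL ℝ y =
      (-(k * ‖y‖^(k-1)) / (‖y‖^k)^2) • ‖y‖⁻¹ • innerSL ℝ y := by
    rw [smul_smul]
    congr 1
    rcases k with _ | k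
    · simp
    · simp only [Nat.add_sub_cancel]
      field_simp
      ring
  rw [e]
  exact h2

lemma ibp {n : ℕ} (g : EuclideanSpace ℝ (Fin n) → ℝ) (hg : ContDiff ℝ 1 g) (hs : HasCompactSupport g)
    (v : EuclideanSpace ℝ (Fin n)) : Integrable (fun x => fderiv ℝ g x v) ∧ ∫ x, fderiv ℝ g x v = 0 := by
  have hi : Integrable (fun x => fderiv ℝ g x v) := by
    apply Continuous.integrable_of_hasCompactSupport
    · have := hg.continuous_fderiv one_ne_zero
      fun_prop
    · exact hs.fderiv_apply ℝ v
  refine ⟨hi, ?_⟩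
  have := integral_mul_fderiv_eq_neg_fderiv_mul_of_integrable (μ := volume) (f := fun _ : EuclideanSpace ℝ (Fin n) => (1:ℝ)) (g := g) (v := v)
    (by simp) (by simpa using hi) (by simpa using hg.continuous.integrable_of_hasCompactSupport hs)
    (fun x _ => by fun_prop) (fun x _ => hg.differentiable one_ne_zero x)
  simpa using this

/-- The divergence theorem for the Newtonian field, in weak form. -/
lemma weak {n : ℕ} (a : EuclideanSpace ℝ (Fin n)) (ρ : ℝ) (hρ0 : 0 < ρ) (hρ : ρ < ‖a‖) (Ψ χ : ℝ → ℝ)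
    (hΨ : ∀ t, HasDerivAt Ψ (χ t) t) (hχ : Continuous χ) (hΨ0 : ∀ t, ρ^2 ≤ t → Ψ t = 0)
    (hχ0 : ∀ t, ρ^2 ≤ t → χ t = 0) :
    Integrable (fun x : EuclideanSpace ℝ (Fin n) => 2 * χ (‖x‖^2) * ((‖a+x‖^n)⁻¹ * inner ℝ x (a + x))) ∧
    ∫ x : EuclideanSpace ℝ (Fin n), 2 * χ (‖x‖^2) * ((‖a+x‖^n)⁻¹ * inner ℝ x (a + x)) = 0 := by
  have hΨc : ContDiff ℝ 1 Ψ := by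
    rw [contDiff_one_iff_deriv]
    refine ⟨fun t => (hΨ t).differentiableAt, ?_⟩
    rwa [show deriv Ψ = χ from funext fun t => (hΨ t).deriv]
  let G : Fin n → EuclideanSpace ℝ (Fin n) → ℝ := fun i x => Ψ (‖x‖^2) * ((‖a+x‖^n)⁻¹ * (a + x) i)
  have hne : ∀ x : EuclideanSpace ℝ (Fin n), ‖x‖ ≤ ρ → a + x ≠ 0 := by
    intro x hx h
    have : a = -x := eq_neg_of_add_eq_zero_left h
    rw [this, norm_neg] at hρ
    linarith
  have hz : ∀ x : EuclideanSpace ℝ (Fin n), ρ < ‖x‖ → ∀ i, G i =ᶠ[𝓝 x] fun _ => 0 := by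
    intro x hx i
    filter_upwards [(isOpen_lt continuous_const continuous_norm).mem_nhds hx] with z hz
    have hz' : ρ < ‖z‖ := hz
    simp only [G]
    rw [hΨ0 _ (by nlinarith), zero_mul]
  have hGc : ∀ i, ContDiff ℝ 1 (G i) := by
    intro i
    rw [contDiff_iff_contDiffAt]
    intro x
    rcases le_or_gt ‖x‖ ρ with hx | hx
    · have hp := hne x hx
      have hp' : ‖a + x‖ ^ n ≠ 0 := by simpa using fun h => absurd h hp
      have h1 : ContDiffAt ℝ 1 (fun x => ‖a + x‖) x :=
        ContDiffAt.norm ℝ (by fun_prop) hp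
      have h2 : ContDiffAt ℝ 1 (fun x => (a + x) i) x := by
        have : ContDiff ℝ 1 (fun x : EuclideanSpace ℝ (Fin n) => (EuclideanSpace.proj i : EuclideanSpace ℝ (Fin n) →L[ℝ] ℝ) (a + x)) := by fun_prop
        exact this.contDiffAt
      exact (hΨc.contDiffAt.comp x (contDiff_norm_sq ℝ).contDiffAt).mul (((h1.pow n).inv hp').mul h2)
    · exact contDiffAt_const.congr_of_eventuallyEq (hz x hx i)
  have hGs : ∀ i, HasCompactSupport (G i) := by
    intro i
    apply HasCompactSupport.intro (isCompact_closedBall 0 ρ)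
    intro x hx
    exact (hz x (by simpa using hx) i).eq_of_nhds
  have hI := fun i => ibp (G i) (hGc i) (hGs i) (EuclideanSpace.single i 1)
  have hsum : ∀ x, ∑ i, fderiv ℝ (G i) x (EuclideanSpace.single i 1) =
      2 * χ (‖x‖^2) * ((‖a+x‖^n)⁻¹ * inner ℝ x (a + x)) := by
    intro x
    rcases le_or_gt ‖x‖ ρ with hx | hx
    · have hp := hne x hx
      have hp' : ‖a + x‖ ≠ 0 := by simpa using hp
      have hd : ∀ i, fderiv ℝ (G i) x (EuclideanSpace.single i 1) =
         2 * χ (‖x‖^2) * ((‖a+x‖^n)⁻¹ * (x i * (a + x) i)) + Ψ (‖x‖^2) * ((‖a+x‖^n)⁻¹ - n * (‖a+x‖^(n+2))⁻¹ * ((a+x) i * (a+x) i)) := by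
        intro i
        have e1 : HasFDerivAt (fun x : EuclideanSpace ℝ (Fin n) => Ψ (‖x‖^2)) (χ (‖x‖^2) • (2 • innerSL ℝ x)) x :=
          (hΨ _).comp_hasFDerivAt x (hasStrictFDerivAt_norm_sq x).hasFDerivAt
        have e2 : HasFDerivAt (fun x : EuclideanSpace ℝ (Fin n) => (‖a+x‖^n)⁻¹) ((-(n:ℝ) * (‖a+x‖^(n+2))⁻¹) • innerSL ℝ (a+x)) x := by
          exact (hasFDerivAt_nrm_pow_inv (k := n) hp).comp x ((hasFDerivAt_id x).const_add a)
        have e3 : HasFDerivAt (fun x : EuclideanSpace ℝ (Fin n) => (a+x) i) (EuclideanSpace.proj i : EuclideanSpace ℝ (Fin n) →L[ℝ] ℝ) x := by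
          exact (EuclideanSpace.proj i : EuclideanSpace ℝ (Fin n) →L[ℝ] ℝ).hasFDerivAt.comp x ((hasFDerivAt_id x).const_add a)
        have e4 := (e1.mul (e2.mul e3)).fderiv
        have e5 : fderiv ℝ (G i) x = _ := e4
        rw [e5]
        simp [EuclideanSpace.inner_single_right]
        ring
      simp only [hd]
      rw [Finset.sum_add_distrib, ← Finset.mul_sum, ← Finset.mul_sum, ← Finset.mul_sum, Finset.sum_sub_distrib, ← Finset.mul_sum]
      have s1 : ∑ i, x i * (a + x) i = inner ℝ x (a + x) := by
        simp [PiLp.inner_apply, mul_comm]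
      have s2 : ∑ i, (a+x) i * (a + x) i = ‖a+x‖^2 := by
        rw [EuclideanSpace.norm_sq_eq]; simp [sq]
      rw [s1, s2]
      have : ∑ i : Fin n, (‖a+x‖^n)⁻¹ - n * (‖a+x‖^(n+2))⁻¹ * ‖a+x‖^2 = 0 := by
        simp
        field_simp
        ring
      rw [this]; ring
    · rw [hχ0 _ (by nlinarith)]
      simp only [mul_zero, zero_mul]
      apply Finset.sum_eq_zero
      intro i _
      rw [(hz x hx i).fderiv_eq]
      simp
  simp only [← hsum]
  refine ⟨integrable_finsetSum _ fun i _ => (hI i).1, ?_⟩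
  rw [integral_finsetSum _ fun i _ => (hI i).1]
  exact Finset.sum_eq_zero fun i _ => (hI i).2


lemma nw_ne {d : ℕ} (a : EuclideanSpace ℝ (Fin (d+1))) (r : ℝ) (hr0 : 0 ≤ r) (hr : r < ‖a‖)
    (θ : sphere (0 : EuclideanSpace ℝ (Fin (d+1))) 1) : a + r • (θ : EuclideanSpace ℝ (Fin (d+1))) ≠ 0 := by
  intro h
  have h2 : a = -(r • (θ : EuclideanSpace ℝ (Fin (d+1)))) := eq_neg_of_add_eq_zero_left h
  have h3 : ‖a‖ = r := by
    rw [h2, norm_neg, norm_smul, norm_eq_of_mem_sphere, Real.norm_of_nonneg hr0, mul_one]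
  linarith

lemma nw_cont {d : ℕ} (a : EuclideanSpace ℝ (Fin (d+1))) (s : Set ℝ) (hs : ∀ r ∈ s, 0 ≤ r ∧ r < ‖a‖) :
    ContinuousOn (Function.uncurry fun (r : ℝ) (θ : sphere (0 : EuclideanSpace ℝ (Fin (d+1))) 1) =>
      (‖a + r • (θ : EuclideanSpace ℝ (Fin (d+1)))‖^(d+1))⁻¹ *
        inner ℝ (θ : EuclideanSpace ℝ (Fin (d+1))) (a + r • (θ : EuclideanSpace ℝ (Fin (d+1)))))
      (s ×ˢ univ) := by
  have c1 : Continuous fun p : ℝ × sphere (0 : EuclideanSpace ℝ (Fin (d+1))) 1 =>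
    a + p.1 • (p.2 : EuclideanSpace ℝ (Fin (d+1))) := by fun_prop
  have c2 : Continuous fun p : ℝ × sphere (0 : EuclideanSpace ℝ (Fin (d+1))) 1 =>
    (p.2 : EuclideanSpace ℝ (Fin (d+1))) := by fun_prop
  refine ContinuousOn.mul (ContinuousOn.inv₀ (c1.norm.pow _).continuousOn ?_) (c2.inner c1).continuousOn
  rintro ⟨r, θ⟩ h
  have := nw_ne a r (hs r h.1).1 (hs r h.1).2 θ
  simpa using fun h => absurd h this

lemma nw_flux {d : ℕ} (a : EuclideanSpace ℝ (Fin (d+1))) (ha : 0 < ‖a‖) :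
    ∀ᵐ r : ℝ, r ∈ Ioo 0 ‖a‖ → ∫ θ : sphere (0 : EuclideanSpace ℝ (Fin (d+1))) 1,
      (‖a + r • (θ : EuclideanSpace ℝ (Fin (d+1)))‖^(d+1))⁻¹ *
        inner ℝ (θ : EuclideanSpace ℝ (Fin (d+1))) (a + r • (θ : EuclideanSpace ℝ (Fin (d+1))))
        ∂(volume : Measure (EuclideanSpace ℝ (Fin (d+1)))).toSphere = 0 := by
  set σ := (volume : Measure (EuclideanSpace ℝ (Fin (d+1)))).toSphere with hσ
  set K : ℝ → ℝ := fun r => ∫ θ : sphere (0 : EuclideanSpace ℝ (Fin (d+1))) 1,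
      (‖a + r • (θ : EuclideanSpace ℝ (Fin (d+1)))‖^(d+1))⁻¹ *
        inner ℝ (θ : EuclideanSpace ℝ (Fin (d+1))) (a + r • (θ : EuclideanSpace ℝ (Fin (d+1)))) ∂σ with hK
  have hKc : ContinuousOn K (Ioo 0 ‖a‖) :=
    continuousOn_integral_of_compact_support isCompact_univ
      (nw_cont a (Ioo 0 ‖a‖) fun r hr => ⟨hr.1.le, hr.2⟩) (by simp)
  have hmain : ∀ᵐ r : ℝ, r ∈ Ioo 0 ‖a‖ → 2 * r^(d+1) * K r = 0 := by
    apply IsOpen.ae_eq_zero_of_integral_contDiff_smul_eq_zero isOpen_Ioo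
    · apply ContinuousOn.locallyIntegrableOn _ measurableSet_Ioo
      exact ContinuousOn.mul (by fun_prop) hKc
    · intro η hη hηc hηs
      obtain ⟨ρ, hρ0, hρ, hηρ⟩ : ∃ ρ, 0 < ρ ∧ ρ < ‖a‖ ∧ ∀ t, ρ ≤ t → η t = 0 := by
        rcases (tsupport η).eq_empty_or_nonempty with he | hne
        · refine ⟨‖a‖/2, by linarith, by linarith, fun t _ => ?_⟩
          exact image_eq_zero_of_notMem_tsupport (by simp [he])
        · obtain ⟨M, hM, hM2⟩ := hηc.isCompact.exists_isGreatest hne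
          have := hηs hM
          refine ⟨(M + ‖a‖)/2, by linarith [this.1], by linarith [this.2], fun t ht => ?_⟩
          apply image_eq_zero_of_notMem_tsupport
          intro h
          have := hM2 h
          linarith [(hηs hM).2]
      have hη0 : ∀ t, t ≤ 0 → η t = 0 := fun t ht =>
        image_eq_zero_of_notMem_tsupport fun h => absurd (hηs h).1 (by linarith)
      let χ : ℝ → ℝ := fun t => η (√t)
      have hχ : Continuous χ := hη.continuous.comp Real.continuous_sqrt
      have hχ0 : ∀ t, ρ^2 ≤ t → χ t = 0 := fun t ht => hηρ _ (Real.le_sqrt_of_sq_le ht)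
      have hw := weak a ρ hρ0 hρ (fun t => ∫ s in (ρ^2)..t, χ s) χ
        (fun t => intervalIntegral.integral_hasDerivAt_right (hχ.intervalIntegrable _ _)
          (hχ.stronglyMeasurableAtFilter _ _) hχ.continuousAt) hχ
        (fun t ht => by
          apply intervalIntegral.integral_zero_ae
          refine Eventually.of_forall fun s hs => hχ0 s ?_
          rw [uIoc_of_le ht] at hs
          exact hs.1.le) hχ0
      have hp := polar d _ hw.1
      rw [hw.2] at hp
      have hp2 := hp.2
      rw [integral_prod_symm _ hp.1] at hp2
      have : ∫ r, η r • (2 * r^(d+1) * K r) = ∫ r in Ioi 0, η r • (2 * r^(d+1) * K r) := by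
        rw [setIntegral_eq_integral_of_forall_compl_eq_zero]
        intro r hr
        rw [hη0 r (by simpa using hr), zero_smul]
      rw [this]
      refine Eq.trans ?_ hp2.symm
      apply setIntegral_congr_fun measurableSet_Ioi
      intro r hr
      have hr' : 0 < r := hr
      simp only [hK, smul_eq_mul]
      rw [← mul_assoc, ← integral_const_mul]
      congr 1
      ext θ
      have e1 : ‖r • (θ : EuclideanSpace ℝ (Fin (d+1)))‖ = r := by
        rw [norm_smul, norm_eq_of_mem_sphere, Real.norm_of_nonneg hr'.le, mul_one]
      simp only [χ, e1, Real.sqrt_sq hr'.le, real_inner_smul_left]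
      ring
  filter_upwards [hmain] with r hr hr2
  have := hr hr2
  have h2 : 2 * r^(d+1) ≠ 0 := by have := hr2.1; positivity
  exact (mul_eq_zero.mp this).resolve_left h2

/-- Mean value property of the Newtonian kernel. -/
lemma nw_mean {m : ℕ} (a : EuclideanSpace ℝ (Fin (m+1+1))) (s : ℝ) (hs0 : 0 ≤ s) (hs : s < ‖a‖) :
    ∫ θ : sphere (0 : EuclideanSpace ℝ (Fin (m+1+1))) 1, (‖a + s • (θ : EuclideanSpace ℝ (Fin (m+1+1)))‖^m)⁻¹
      ∂(volume : Measure (EuclideanSpace ℝ (Fin (m+1+1)))).toSphere =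
    (‖a‖^m)⁻¹ * (volume : Measure (EuclideanSpace ℝ (Fin (m+1+1)))).toSphere.real univ := by
  set σ := (volume : Measure (EuclideanSpace ℝ (Fin (m+1+1)))).toSphere with hσ
  have hcont := nw_cont a (Icc 0 s) fun r hr => ⟨hr.1, hr.2.trans_lt hs⟩
  have hftc : ∀ θ : sphere (0 : EuclideanSpace ℝ (Fin (m+1+1))) 1,
      ∫ r in (0:ℝ)..s, (‖a + r • (θ : EuclideanSpace ℝ (Fin (m+1+1)))‖^(m+1+1))⁻¹ *
        inner ℝ (θ : EuclideanSpace ℝ (Fin (m+1+1))) (a + r • (θ : EuclideanSpace ℝ (Fin (m+1+1)))) * (-(m:ℝ))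
      = (‖a + s • (θ : EuclideanSpace ℝ (Fin (m+1+1)))‖^m)⁻¹ - (‖a‖^m)⁻¹ := by
    intro θ
    have := intervalIntegral.integral_eq_sub_of_hasDerivAt (a := 0) (b := s)
      (f := fun r => (‖a + r • (θ : EuclideanSpace ℝ (Fin (m+1+1)))‖^m)⁻¹)
      (f' := fun r => (‖a + r • (θ : EuclideanSpace ℝ (Fin (m+1+1)))‖^(m+1+1))⁻¹ *
        inner ℝ (θ : EuclideanSpace ℝ (Fin (m+1+1))) (a + r • (θ : EuclideanSpace ℝ (Fin (m+1+1)))) * (-(m:ℝ))) ?_ ?_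
    · simpa using this
    · intro r hr
      rw [uIcc_of_le hs0] at hr
      have hp := nw_ne a r hr.1 (hr.2.trans_lt hs) θ
      have h1 : HasDerivAt (fun r : ℝ => a + r • (θ : EuclideanSpace ℝ (Fin (m+1+1)))) ((1:ℝ) • (θ : EuclideanSpace ℝ (Fin (m+1+1)))) r :=
        ((hasDerivAt_id r).smul_const _).const_add a
      have h2 := (hasFDerivAt_nrm_pow_inv (k := m) hp).comp_hasDerivAt r h1
      have e : (‖a + r • (θ : EuclideanSpace ℝ (Fin (m+1+1)))‖^(m+1+1))⁻¹ *
        inner ℝ (θ : EuclideanSpace ℝ (Fin (m+1+1))) (a + r • (θ : EuclideanSpace ℝ (Fin (m+1+1)))) * (-(m:ℝ)) =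
        ((-(m:ℝ) * (‖a + r • (θ : EuclideanSpace ℝ (Fin (m+1+1)))‖^(m+2))⁻¹) • innerSL ℝ (a + r • (θ : EuclideanSpace ℝ (Fin (m+1+1))))) ((1:ℝ) • (θ : EuclideanSpace ℝ (Fin (m+1+1)))) := by
        simp only [one_smul, _root_.smul_apply, innerSL_apply_apply, smul_eq_mul]
        rw [real_inner_comm]
        ring
      rw [e]
      exact h2
    · apply ContinuousOn.intervalIntegrable
      rw [uIcc_of_le hs0]
      refine ContinuousOn.mul ?_ continuousOn_const
      exact hcont.comp (f := fun r : ℝ => (r, θ)) (by fun_prop) (fun r hr => ⟨hr, mem_univ _⟩)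
  have hIntg : Integrable (Function.uncurry fun (r : ℝ) (θ : sphere (0 : EuclideanSpace ℝ (Fin (m+1+1))) 1) =>
      (‖a + r • (θ : EuclideanSpace ℝ (Fin (m+1+1)))‖^(m+1+1))⁻¹ *
        inner ℝ (θ : EuclideanSpace ℝ (Fin (m+1+1))) (a + r • (θ : EuclideanSpace ℝ (Fin (m+1+1)))) * (-(m:ℝ)))
      ((volume.restrict (uIoc 0 s)).prod σ) := by
    have h1 := (hcont.mul (continuousOn_const (c := -(m:ℝ)))).integrableOn_compact
      (isCompact_Icc.prod isCompact_univ) (μ := (volume : Measure ℝ).prod σ)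
    have h2 := h1.mono_set (prod_mono (uIoc_of_le hs0 ▸ Ioc_subset_Icc_self) (subset_refl univ) : uIoc 0 s ×ˢ univ ⊆ _)
    rw [IntegrableOn, ← Measure.prod_restrict, Measure.restrict_univ] at h2
    exact h2
  have hsw := intervalIntegral_integral_swap hIntg
  simp only [hftc] at hsw
  have hz : ∫ (x : ℝ) in (0:ℝ)..s, ∫ (y : sphere (0 : EuclideanSpace ℝ (Fin (m+1+1))) 1),
     (‖a + x • (y : EuclideanSpace ℝ (Fin (m+1+1)))‖^(m+1+1))⁻¹ *
        inner ℝ (y : EuclideanSpace ℝ (Fin (m+1+1))) (a + x • (y : EuclideanSpace ℝ (Fin (m+1+1)))) * (-(m:ℝ)) ∂σ = 0 := by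
    apply intervalIntegral.integral_zero_ae
    filter_upwards [nw_flux a (hs0.trans_lt hs)] with r hr hr2
    rw [uIoc_of_le hs0] at hr2
    rw [integral_mul_const, hr ⟨hr2.1, hr2.2.trans_lt hs⟩, zero_mul]
  rw [hz, integral_sub, integral_const, smul_eq_mul] at hsw
  · linarith
  · apply Continuous.integrable_of_hasCompactSupport _ (HasCompactSupport.of_compactSpace _)
    refine Continuous.inv₀ (by fun_prop) fun θ => ?_
    have := nw_ne a s hs0 hs θ
    simpa using fun h => absurd h this
  · exact integrable_const _

lemma nw_mean' {m : ℕ} (c : EuclideanSpace ℝ (Fin (m+1+1))) (R : ℝ) (hc : ‖c‖ < R) :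
    ∫ θ : sphere (0 : EuclideanSpace ℝ (Fin (m+1+1))) 1, (‖c + R • (θ : EuclideanSpace ℝ (Fin (m+1+1)))‖^m)⁻¹
      ∂(volume : Measure (EuclideanSpace ℝ (Fin (m+1+1)))).toSphere =
    (R^m)⁻¹ * (volume : Measure (EuclideanSpace ℝ (Fin (m+1+1)))).toSphere.real univ := by
  have hR : 0 < R := (norm_nonneg c).trans_lt hc
  rcases eq_or_ne c 0 with rfl | h0
  · simp [norm_smul, abs_of_pos hR, mul_comm]
  · have hc0 : 0 < ‖c‖ := norm_pos_iff.mpr h0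
    have ha : ‖(R/‖c‖) • c‖ = R := by
      rw [norm_smul, Real.norm_of_nonneg (by positivity)]; field_simp
    have := nw_mean ((R/‖c‖) • c) ‖c‖ hc0.le (by rw [ha]; exact hc)
    rw [ha] at this
    rw [← this]
    congr 1
    ext θ
    congr 2
    rw [← sq_eq_sq₀ (norm_nonneg _) (norm_nonneg _), norm_add_sq_real, norm_add_sq_real, ha, norm_smul, norm_smul,
      norm_eq_of_mem_sphere, Real.norm_of_nonneg hR.le, Real.norm_of_nonneg hc0.le, real_inner_smul_left,
      real_inner_smul_right, real_inner_smul_right]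
    field_simp
    ring


lemma test_fn {m : ℕ} (hm : 0 < m) (R₁ : ℝ) (h1 : 0 < R₁) : ∃ u : EuclideanSpace ℝ (Fin (m+1+1)) → ℝ,
    ContDiff ℝ (⊤ : ℕ∞) u ∧ (∀ x, R₁ ≤ ‖x‖ → u x = (m:ℝ)⁻¹ * ((R₁^m)⁻¹ - (‖x‖^m)⁻¹)) ∧
    ∀ x, R₁ < ‖x‖ → ‖gradient u x‖^2 = ((‖x‖^(m+1))⁻¹)^2 := by
  let u : EuclideanSpace ℝ (Fin (m+1+1)) → ℝ := fun x =>
    Real.smoothTransition ((‖x‖^2 - R₁^2/4) / (3*R₁^2/4)) * ((m:ℝ)⁻¹ * ((R₁^m)⁻¹ - (‖x‖^m)⁻¹))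
  have hu1 : ∀ x, R₁ ≤ ‖x‖ → u x = (m:ℝ)⁻¹ * ((R₁^m)⁻¹ - (‖x‖^m)⁻¹) := by
    intro x hx
    simp only [u]
    rw [Real.smoothTransition.one_of_one_le, one_mul]
    rw [le_div_iff₀ (by positivity)]
    nlinarith
  refine ⟨u, ?_, hu1, ?_⟩
  · rw [contDiff_iff_contDiffAt]
    intro x
    rcases eq_or_ne x 0 with rfl | hx
    · apply contDiffAt_const (c := (0:ℝ)) |>.congr_of_eventuallyEq
      filter_upwards [ball_mem_nhds (0 : EuclideanSpace ℝ (Fin (m+1+1))) (half_pos h1)] with z hz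
      have hz' : ‖z‖ < R₁/2 := by simpa using hz
      simp only [u]
      rw [Real.smoothTransition.zero_of_nonpos, zero_mul]
      apply div_nonpos_of_nonpos_of_nonneg _ (by positivity)
      nlinarith [norm_nonneg z]
    · have hn : ContDiffAt ℝ (⊤ : ℕ∞) (fun z : EuclideanSpace ℝ (Fin (m+1+1)) => ‖z‖) x := contDiffAt_norm ℝ hx
      have hp : ‖x‖^m ≠ 0 := by simpa using fun h => absurd h hx
      have hs : ContDiffAt ℝ (⊤ : ℕ∞) (fun z : EuclideanSpace ℝ (Fin (m+1+1)) => (‖z‖^2 - R₁^2/4) / (3*R₁^2/4)) x :=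
        ((hn.pow 2).sub contDiffAt_const).div_const _
      exact (Real.smoothTransition.contDiffAt.comp x hs).mul
        (contDiffAt_const.mul (contDiffAt_const.sub ((hn.pow m).inv hp)))
  · intro x hx
    have hx0 : x ≠ 0 := by
      rintro rfl
      simp at hx; linarith
    have hx' : ‖x‖ ≠ 0 := by simpa using hx0
    have he : u =ᶠ[𝓝 x] fun z => (m:ℝ)⁻¹ * ((R₁^m)⁻¹ - (‖z‖^m)⁻¹) := by
      filter_upwards [(isOpen_lt continuous_const continuous_norm).mem_nhds hx] with z hz
      exact hu1 z (le_of_lt hz)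
    have hd : HasFDerivAt (fun z : EuclideanSpace ℝ (Fin (m+1+1)) => (m:ℝ)⁻¹ * ((R₁^m)⁻¹ - (‖z‖^m)⁻¹)) _ x :=
      ((hasFDerivAt_nrm_pow_inv (k := m) hx0).const_sub _).const_mul _
    have hf : fderiv ℝ u x = (‖x‖^(m+2))⁻¹ • innerSL ℝ x := by
      rw [he.fderiv_eq, hd.fderiv]
      ext z
      simp
      field_simp
    unfold gradient
    rw [LinearIsometryEquiv.norm_map, hf, norm_smul, innerSL_apply_norm, Real.norm_of_nonneg (by positivity)]
    congr 1
    field_simp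
    ring

lemma L_val {m : ℕ} (hm : 0 < m) {R₁ R₂ : ℝ} (h1 : 0 < R₁) (h12 : R₁ < R₂) :
    ∫ r in R₁..R₂, (r ^ (m+1))⁻¹ = (m:ℝ)⁻¹ * ((R₁^m)⁻¹ - (R₂^m)⁻¹) := by
  have hne : ∀ r ∈ uIcc R₁ R₂, r ≠ 0 := by
    intro r hr
    rw [uIcc_of_le h12.le] at hr
    linarith [hr.1]
  have := intervalIntegral.integral_eq_sub_of_hasDerivAt (a := R₁) (b := R₂)
    (f := fun r => (m:ℝ)⁻¹ * ((R₁^m)⁻¹ - (r^m)⁻¹)) (f' := fun r => (r^(m+1))⁻¹) ?_ ?_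
  · rw [this]; ring
  · intro r hr
    have h0 := hne r hr
    have h := (((hasDerivAt_pow m r).fun_inv (pow_ne_zero _ h0)).const_sub ((R₁^m)⁻¹)).const_mul ((m:ℝ)⁻¹)
    obtain ⟨k, rfl⟩ := Nat.exists_eq_succ_of_ne_zero hm.ne'
    have hk : k.succ - 1 = k := rfl
    rw [hk] at h
    refine HasDerivAt.congr_deriv h ?_
    simp only [Nat.succ_eq_add_one]
    have : ((k.succ:ℕ):ℝ) ≠ 0 := by positivity
    have : ((k+1:ℕ):ℝ) ≠ 0 := by positivity
    field_simp
    ring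
  · apply ContinuousOn.intervalIntegrable
    exact ContinuousOn.inv₀ (by fun_prop) fun r hr => pow_ne_zero _ (hne r hr)

lemma L_pos {m : ℕ} (hm : 0 < m) {R₁ R₂ : ℝ} (h1 : 0 < R₁) (h12 : R₁ < R₂) :
    0 < (m:ℝ)⁻¹ * ((R₁^m)⁻¹ - (R₂^m)⁻¹) := by
  have : (R₂^m)⁻¹ < (R₁^m)⁻¹ := by
    apply inv_strictAnti₀ (by positivity)
    exact pow_lt_pow_left₀ h12 h1.le hm.ne'
  have hm' : (0:ℝ) < m := by exact_mod_cast hm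
  exact mul_pos (by positivity) (by linarith)

lemma w_int {d : ℕ} {R₁ R₂ : ℝ} (h1 : 0 < R₁) (c : EuclideanSpace ℝ (Fin (d+1))) :
    IntegrableOn (fun x : EuclideanSpace ℝ (Fin (d+1)) => ((‖x‖^d)⁻¹)^2) (ball c R₂ \ closedBall 0 R₁) := by
  apply IntegrableOn.mono_set (t := closedBall c R₂ \ ball 0 R₁)
  · apply ContinuousOn.integrableOn_compact ((isCompact_closedBall _ _).diff isOpen_ball)
    refine ContinuousOn.pow (ContinuousOn.inv₀ (by fun_prop) ?_) 2
    intro x hx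
    have : R₁ ≤ ‖x‖ := by simpa using hx.2
    have : 0 < ‖x‖ := by linarith
    positivity
  · exact sdiff_subset_sdiff ball_subset_closedBall ball_subset_closedBall

lemma num_zero {d : ℕ} {R₁ R₂ : ℝ} (h1 : 0 < R₁) (h12 : R₁ < R₂) :
    ∫ x in ball (0 : EuclideanSpace ℝ (Fin (d+1))) R₂ \ closedBall 0 R₁, ((‖x‖^d)⁻¹)^2 =
      (volume : Measure (EuclideanSpace ℝ (Fin (d+1)))).toSphere.real univ * ∫ r in R₁..R₂, (r ^ d)⁻¹ := by
  have hms : MeasurableSet (ball (0 : EuclideanSpace ℝ (Fin (d+1))) R₂ \ closedBall 0 R₁) :=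
    measurableSet_ball.diff measurableSet_closedBall
  rw [← integral_indicator hms]
  have hp := (polar d _ ((w_int (R₂ := R₂) h1 0).integrable_indicator hms)).2
  rw [hp]
  have : ∀ᵐ p ∂((volume : Measure (EuclideanSpace ℝ (Fin (d+1)))).toSphere.prod (volume.restrict (Ioi 0))),
     p.2 ^ d * (indicator (ball (0 : EuclideanSpace ℝ (Fin (d+1))) R₂ \ closedBall 0 R₁) (fun x => ((‖x‖^d)⁻¹)^2)
       (p.2 • (p.1 : EuclideanSpace ℝ (Fin (d+1))))) = (fun r => indicator (Ioo R₁ R₂) (fun r => (r^d)⁻¹) r) p.2 := by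
    have : ∀ᵐ p ∂((volume : Measure (EuclideanSpace ℝ (Fin (d+1)))).toSphere.prod ((volume : Measure ℝ).restrict (Ioi 0))), p.2 ∈ Ioi (0:ℝ) :=
      Measure.quasiMeasurePreserving_snd.ae (ae_restrict_mem measurableSet_Ioi)
    filter_upwards [this] with p hp
    have hp' : 0 < p.2 := hp
    have e1 : ‖p.2 • (p.1 : EuclideanSpace ℝ (Fin (d+1)))‖ = p.2 := by
      rw [norm_smul, norm_eq_of_mem_sphere, Real.norm_of_nonneg hp'.le, mul_one]
    by_cases h : p.2 ∈ Ioo R₁ R₂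
    · rw [indicator_of_mem, indicator_of_mem h, e1]
      · field_simp
      · simp only [Set.mem_sdiff, mem_ball_zero_iff, mem_closedBall_zero_iff, e1, not_le]
        exact ⟨h.2, h.1⟩
    · rw [indicator_of_notMem, indicator_of_notMem h, mul_zero]
      simp only [Set.mem_sdiff, mem_ball_zero_iff, mem_closedBall_zero_iff, e1, not_le]
      exact fun h' => h ⟨h'.2, h'.1⟩
  rw [integral_congr_ae this, integral_fun_snd, smul_eq_mul, integral_indicator measurableSet_Ioo,
    Measure.restrict_restrict measurableSet_Ioo, intervalIntegral.integral_of_le h12.le, integral_Ioc_eq_integral_Ioo]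
  congr 3
  rw [inter_eq_left]
  intro r hr
  exact h1.trans hr.1

lemma bathtub {d : ℕ} (hd : 0 < d) {R₁ R₂ : ℝ} (h1 : 0 < R₁) (h12 : R₁ < R₂) (c : EuclideanSpace ℝ (Fin (d+1)))
    (hc : c ≠ 0) (hsub : closedBall (0 : EuclideanSpace ℝ (Fin (d+1))) R₁ ⊆ ball c R₂) :
    ∫ x in ball c R₂ \ closedBall 0 R₁, ((‖x‖^d)⁻¹)^2 <
    ∫ x in ball (0 : EuclideanSpace ℝ (Fin (d+1))) R₂ \ closedBall 0 R₁, ((‖x‖^d)⁻¹)^2 := by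
  have hR2 : 0 < R₂ := h1.trans h12
  have hc0 : 0 < ‖c‖ := norm_pos_iff.mpr hc
  set B := closedBall (0 : EuclideanSpace ℝ (Fin (d+1))) R₁ with hB
  set D := ball c R₂ \ B with hD
  set A := ball (0 : EuclideanSpace ℝ (Fin (d+1))) R₂ \ B with hA
  have hDm : MeasurableSet D := measurableSet_ball.diff measurableSet_closedBall
  have hAm : MeasurableSet A := measurableSet_ball.diff measurableSet_closedBall
  have hDf : volume D ≠ ⊤ := measure_ne_top_of_subset sdiff_subset measure_ball_lt_top.ne
  have hAf : volume A ≠ ⊤ := measure_ne_top_of_subset sdiff_subset measure_ball_lt_top.ne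
  have hvol : volume.real D = volume.real A := by
    have : volume D = volume A := by
      rw [hD, hA, measure_sdiff hsub measurableSet_closedBall.nullMeasurableSet measure_closedBall_lt_top.ne,
        measure_sdiff (closedBall_subset_ball h12) measurableSet_closedBall.nullMeasurableSet measure_closedBall_lt_top.ne,
        Measure.addHaar_ball_center]
    simp [Measure.real, this]
  let w : EuclideanSpace ℝ (Fin (d+1)) → ℝ := fun x => ((‖x‖^d)⁻¹)^2
  let w₂ : ℝ := ((R₂^d)⁻¹)^2
  let g : EuclideanSpace ℝ (Fin (d+1)) → ℝ := fun x => w x - w₂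
  have iD : IntegrableOn w D := w_int h1 c
  have iA : IntegrableOn w A := w_int h1 0
  have gD : IntegrableOn g D := iD.sub (integrableOn_const hDf)
  have gA : IntegrableOn g A := iA.sub (integrableOn_const hAf)
  have eD : ∫ x in D, g x = (∫ x in D, w x) - ∫ x in D, w₂ := integral_sub iD (integrableOn_const hDf)
  have eA : ∫ x in A, g x = (∫ x in A, w x) - ∫ x in A, w₂ := integral_sub iA (integrableOn_const hAf)
  rw [setIntegral_const] at eD eA
  rw [hvol] at eD
  have sD := integral_inter_add_sdiff hAm gD
  have sA := integral_inter_add_sdiff hDm gA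
  rw [inter_comm A D] at sA
  have n1 : ∫ x in D \ A, g x ≤ 0 := by
    apply setIntegral_nonpos (hDm.diff hAm)
    rintro x ⟨hx1, hx2⟩
    have : R₂ ≤ ‖x‖ := by
      by_contra h
      exact hx2 ⟨by simpa using h, hx1.2⟩
    simp only [g, w, w₂, sub_nonpos]
    gcongr
  have hgpos : ∀ x ∈ A, 0 < g x := by
    rintro x ⟨hx1, hx2⟩
    have a1 : ‖x‖ < R₂ := by simpa using hx1
    have a2 : R₁ < ‖x‖ := by simpa [hB] using hx2
    have a3 : 0 < ‖x‖ := h1.trans a2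
    simp only [g, w, w₂, sub_pos]
    apply pow_lt_pow_left₀ _ (by positivity) two_ne_zero
    apply inv_strictAnti₀ (by positivity)
    exact pow_lt_pow_left₀ a1 a3.le hd.ne'
  have n2 : 0 < ∫ x in A \ D, g x := by
    rw [setIntegral_pos_iff_support_of_nonneg_ae]
    · have hO : IsOpen (ball (0 : EuclideanSpace ℝ (Fin (d+1))) R₂ \ closedBall c R₂) :=
        isOpen_ball.sdiff isClosed_closedBall
      have hne : (ball (0 : EuclideanSpace ℝ (Fin (d+1))) R₂ \ closedBall c R₂).Nonempty := by
        obtain ⟨t, ht1, ht2⟩ : ∃ t, max 0 (R₂ - ‖c‖) < t ∧ t < R₂ :=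
          exists_between (max_lt hR2 (by linarith))
        have ht0 : 0 < t := (le_max_left _ _).trans_lt ht1
        have ht3 : R₂ - ‖c‖ < t := (le_max_right _ _).trans_lt ht1
        refine ⟨(-(t/‖c‖)) • c, ?_, ?_⟩
        · simp only [mem_ball_zero_iff, norm_smul, norm_neg]
          rw [Real.norm_of_nonneg (by positivity), div_mul_cancel₀ _ hc0.ne']
          exact ht2
        · simp only [mem_closedBall, dist_eq_norm, not_le]
          have : (-(t/‖c‖)) • c - c = (-(t/‖c‖ + 1)) • c := by
            module
          rw [this, norm_smul, norm_neg, Real.norm_of_nonneg (by positivity), add_mul, div_mul_cancel₀ _ hc0.ne']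
          linarith
      refine (hO.measure_pos volume hne).trans_le (measure_mono ?_)
      rintro x ⟨hx1, hx2⟩
      have hxB : x ∉ B := fun h => hx2 (ball_subset_closedBall (hsub h))
      have hxA : x ∈ A := ⟨hx1, hxB⟩
      exact ⟨(hgpos x hxA).ne', hxA, fun h => hx2 (ball_subset_closedBall h.1)⟩
    · filter_upwards [ae_restrict_mem (hAm.diff hDm)] with x hx
      exact (hgpos x hx.1).le
    · exact gA.mono_set sdiff_subset
  change ∫ x in D, w x < ∫ x in A, w x
  linarith

lemma den_lower {m : ℕ} {R₁ R₂ : ℝ} (h1 : 0 < R₁) (_h12 : R₁ < R₂) (c : EuclideanSpace ℝ (Fin (m+1+1)))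
    (hc : ‖c‖ < R₂) (hsph : ∀ θ : sphere (0 : EuclideanSpace ℝ (Fin (m+1+1))) 1, R₁ ≤ ‖c + R₂ • (θ : EuclideanSpace ℝ (Fin (m+1+1)))‖)
    (u : EuclideanSpace ℝ (Fin (m+1+1)) → ℝ) (hu : Continuous u)
    (hu1 : ∀ x, R₁ ≤ ‖x‖ → u x = (m:ℝ)⁻¹ * ((R₁^m)⁻¹ - (‖x‖^m)⁻¹)) :
    (volume : Measure (EuclideanSpace ℝ (Fin (m+1+1)))).toSphere.real univ * ((m:ℝ)⁻¹ * ((R₁^m)⁻¹ - (R₂^m)⁻¹))^2 ≤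
    ∫ θ : sphere (0 : EuclideanSpace ℝ (Fin (m+1+1))) 1, (u (c + R₂ • (θ : EuclideanSpace ℝ (Fin (m+1+1)))))^2
      ∂(volume : Measure (EuclideanSpace ℝ (Fin (m+1+1)))).toSphere := by
  set σ := (volume : Measure (EuclideanSpace ℝ (Fin (m+1+1)))).toSphere with hσ
  set L := (m:ℝ)⁻¹ * ((R₁^m)⁻¹ - (R₂^m)⁻¹) with hL
  have hIntg : ∀ f : sphere (0 : EuclideanSpace ℝ (Fin (m+1+1))) 1 → ℝ, Continuous f → Integrable f σ :=
    fun f hf => hf.integrable_of_hasCompactSupport (HasCompactSupport.of_compactSpace _)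
  have hpos : ∀ θ : sphere (0 : EuclideanSpace ℝ (Fin (m+1+1))) 1, ‖c + R₂ • (θ : EuclideanSpace ℝ (Fin (m+1+1)))‖^m ≠ 0 := fun θ => by
    have := hsph θ
    have : 0 < ‖c + R₂ • (θ : EuclideanSpace ℝ (Fin (m+1+1)))‖ := by linarith
    positivity
  have hmean : ∫ θ : sphere (0 : EuclideanSpace ℝ (Fin (m+1+1))) 1, u (c + R₂ • (θ : EuclideanSpace ℝ (Fin (m+1+1)))) ∂σ = L * σ.real univ := by
    have : ∀ θ : sphere (0 : EuclideanSpace ℝ (Fin (m+1+1))) 1, u (c + R₂ • (θ : EuclideanSpace ℝ (Fin (m+1+1)))) =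
      (m:ℝ)⁻¹ * ((R₁^m)⁻¹ - (‖c + R₂ • (θ : EuclideanSpace ℝ (Fin (m+1+1)))‖^m)⁻¹) := fun θ => hu1 _ (hsph θ)
    simp only [this]
    have hci : Integrable (fun θ : sphere (0 : EuclideanSpace ℝ (Fin (m+1+1))) 1 =>
        (‖c + R₂ • (θ : EuclideanSpace ℝ (Fin (m+1+1)))‖^m)⁻¹) σ :=
      hIntg _ (Continuous.inv₀ (by fun_prop) hpos)
    rw [integral_const_mul, integral_sub (integrable_const _) hci, nw_mean' c R₂ hc, integral_const,
      smul_eq_mul, hL]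
    ring
  have hnn : 0 ≤ ∫ θ : sphere (0 : EuclideanSpace ℝ (Fin (m+1+1))) 1, (u (c + R₂ • (θ : EuclideanSpace ℝ (Fin (m+1+1)))) - L)^2 ∂σ :=
    integral_nonneg fun θ => sq_nonneg _
  have he : ∀ θ : sphere (0 : EuclideanSpace ℝ (Fin (m+1+1))) 1, (u (c + R₂ • (θ : EuclideanSpace ℝ (Fin (m+1+1)))) - L)^2 =
     u (c + R₂ • (θ : EuclideanSpace ℝ (Fin (m+1+1))))^2 - ((2*L) * u (c + R₂ • (θ : EuclideanSpace ℝ (Fin (m+1+1)))) - L^2) := fun θ => by ring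
  simp only [he] at hnn
  have hcu : Continuous fun θ : sphere (0 : EuclideanSpace ℝ (Fin (m+1+1))) 1 => u (c + R₂ • (θ : EuclideanSpace ℝ (Fin (m+1+1)))) :=
    hu.comp (by fun_prop)
  have i1 : Integrable (fun θ : sphere (0 : EuclideanSpace ℝ (Fin (m+1+1))) 1 =>
      u (c + R₂ • (θ : EuclideanSpace ℝ (Fin (m+1+1))))^2) σ := hIntg _ (by fun_prop)
  have i2 : Integrable (fun θ : sphere (0 : EuclideanSpace ℝ (Fin (m+1+1))) 1 =>
      (2*L) * u (c + R₂ • (θ : EuclideanSpace ℝ (Fin (m+1+1))))) σ := hIntg _ (by fun_prop)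
  have i3 : Integrable (fun θ : sphere (0 : EuclideanSpace ℝ (Fin (m+1+1))) 1 => L^2) σ := integrable_const _
  have i4 : Integrable (fun θ : sphere (0 : EuclideanSpace ℝ (Fin (m+1+1))) 1 =>
      (2*L) * u (c + R₂ • (θ : EuclideanSpace ℝ (Fin (m+1+1)))) - L^2) σ := i2.sub i3
  rw [integral_sub i1 i4, integral_sub i2 i3,
    integral_const_mul, hmean, integral_const, smul_eq_mul] at hnn
  linarith

lemma sigma_pos (d : ℕ) : 0 < (volume : Measure (EuclideanSpace ℝ (Fin (d+1)))).toSphere.real univ := by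
  rw [Measure.toSphere_real_apply_univ]
  have : 0 < volume.real (ball (0 : EuclideanSpace ℝ (Fin (d+1))) 1) :=
    ENNReal.toReal_pos (measure_ball_pos _ _ one_pos).ne' measure_ball_lt_top.ne
  simp only [finrank_euclideanSpace, Fintype.card_fin]
  positivity

lemma stek_main {m : ℕ} (hm : 0 < m) {R₁ R₂ : ℝ} (h1 : 0 < R₁) (h12 : R₁ < R₂)
    (c : EuclideanSpace ℝ (Fin (m+1+1)))
    (hsub : closure (Metric.ball (0 : EuclideanSpace ℝ (Fin (m+1+1))) R₁) ⊆ Metric.ball c R₂) :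
    tau1 (m+1+1) R₁ R₂ c ≤ tau1 (m+1+1) R₁ R₂ 0 ∧
    (tau1 (m+1+1) R₁ R₂ c = tau1 (m+1+1) R₁ R₂ 0 ↔ stekDom (m+1+1) R₁ R₂ c = stekDom (m+1+1) R₁ R₂ 0) := by
  rcases eq_or_ne c 0 with rfl | hc
  · simp
  have hR2 : 0 < R₂ := h1.trans h12
  have hc0 : 0 < ‖c‖ := norm_pos_iff.mpr hc
  have hdom : ∀ c, stekDom (m+1+1) R₁ R₂ c = ball c R₂ \ closedBall 0 R₁ := by
    intro c
    rw [stekDom, closure_ball _ h1.ne']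
  rw [closure_ball _ h1.ne'] at hsub
  have hcR : ‖c‖ < R₂ := by
    have : (0 : EuclideanSpace ℝ (Fin (m+1+1))) ∈ ball c R₂ := hsub (by simp [h1.le])
    simpa using this
  have hdim : (((m+1+1 : ℕ) : ℝ) - 1) = ((m+1 : ℕ) : ℝ) := by push_cast; ring
  have hne : stekDom (m+1+1) R₁ R₂ c ≠ stekDom (m+1+1) R₁ R₂ 0 := by
    rw [hdom, hdom]
    intro h
    have hn : ‖(R₂/‖c‖) • c‖ = R₂ := by
      rw [norm_smul, Real.norm_of_nonneg (by positivity)]; field_simp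
    have hx : (R₂/‖c‖) • c ∈ ball c R₂ \ closedBall 0 R₁ := by
      refine ⟨?_, ?_⟩
      · have e : (R₂/‖c‖) • c - c = (R₂/‖c‖ - 1) • c := by module
        rw [mem_ball, dist_eq_norm, e, norm_smul, Real.norm_of_nonneg, sub_mul, div_mul_cancel₀ _ hc0.ne']
        · linarith
        · rw [sub_nonneg, le_div_iff₀ hc0]; linarith
      · rw [mem_closedBall_zero_iff, hn]; linarith
    rw [h] at hx
    have := hx.1
    rw [mem_ball_zero_iff, hn] at this
    exact lt_irrefl _ this
  have hlt : tau1 (m+1+1) R₁ R₂ c < tau1 (m+1+1) R₁ R₂ 0 := by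
    obtain ⟨k, hk, hkf⟩ := sphere_const (d := m+1) R₂ hR2
    obtain ⟨u, hu, hu1, hu2⟩ := test_fn hm R₁ h1
    have hLv := L_val hm h1 h12
    have hLp := L_pos hm h1 h12
    have hσ := sigma_pos (m+1)
    set σ := (volume : Measure (EuclideanSpace ℝ (Fin (m+1+1)))).toSphere with hσd
    set L := (m:ℝ)⁻¹ * ((R₁^m)⁻¹ - (R₂^m)⁻¹) with hL
    have hu0 : ∀ p ∈ sphere (0 : EuclideanSpace ℝ (Fin (m+1+1))) R₁, u p = 0 := by
      intro p hp
      have hp' : ‖p‖ = R₁ := by simpa using hp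
      rw [hu1 p hp'.ge, hp', sub_self, mul_zero]
    have hout : ∀ c : EuclideanSpace ℝ (Fin (m+1+1)), closedBall 0 R₁ ⊆ ball c R₂ →
        ∀ θ : sphere (0 : EuclideanSpace ℝ (Fin (m+1+1))) 1, R₁ ≤ ‖c + R₂ • (θ : EuclideanSpace ℝ (Fin (m+1+1)))‖ := by
      intro c hsub θ
      by_contra h
      have h2 : c + R₂ • (θ : EuclideanSpace ℝ (Fin (m+1+1))) ∈ ball c R₂ :=
        hsub (mem_closedBall_zero_iff.mpr (not_le.mp h).le)
      rw [mem_ball, dist_eq_norm, add_sub_cancel_left, norm_smul, norm_eq_of_mem_sphere, Real.norm_of_nonneg hR2.le, mul_one] at h2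
      exact lt_irrefl _ h2
    have hden : ∀ c : EuclideanSpace ℝ (Fin (m+1+1)), ‖c‖ < R₂ → closedBall 0 R₁ ⊆ ball c R₂ →
        k * (σ.real univ * L^2) ≤ ∫ p in sphere c R₂, (u p)^2 ∂(μH[((m+1 : ℕ) : ℝ)]) := by
      intro c hcR hsub
      rw [hkf c (fun p => (u p)^2) (hu.continuous.pow 2)]
      exact mul_le_mul_of_nonneg_left (den_lower h1 h12 c hcR (hout c hsub) u hu.continuous hu1) hk.le
    have hdpos : 0 < k * (σ.real univ * L^2) := by positivity
    have hlow : (k * L)⁻¹ ≤ tau1 (m+1+1) R₁ R₂ 0 := by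
      unfold tau1
      rw [hdim]
      apply le_csInf
      · refine ⟨_, u, hu, hu0, ?_, rfl⟩
        exact hdpos.trans_le (hden 0 (by simpa using hR2) (closedBall_subset_ball h12))
      · rintro t ⟨v, hv, hv0, hvp, rfl⟩
        have h3 := lower (d := m+1) h1 h12 v (hv.of_le (by exact_mod_cast le_top)) hv0 L hLv.symm hLp
        rw [le_div_iff₀ hvp, hdom, hkf 0 (fun p => (v p)^2) (hv.continuous.pow 2)]
        simp only [zero_add]
        refine le_trans (le_of_eq ?_) h3
        rw [← hσd]
        field_simp
    have hup : tau1 (m+1+1) R₁ R₂ c ≤ (∫ x in stekDom (m+1+1) R₁ R₂ c, ‖gradient u x‖^2) /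
            (∫ p in Metric.sphere c R₂, (u p)^2 ∂(μH[((m+1 : ℕ) : ℝ)])) := by
      unfold tau1
      rw [hdim]
      apply csInf_le
      · refine ⟨0, ?_⟩
        rintro t ⟨v, hv, hv0, hvp, rfl⟩
        exact div_nonneg (integral_nonneg fun x => sq_nonneg _) hvp.le
      · exact ⟨u, hu, hu0, hdpos.trans_le (hden c hcR hsub), rfl⟩
    refine hup.trans_lt (lt_of_lt_of_le ?_ hlow)
    have hd := hden c hcR hsub
    rw [div_lt_iff₀ (hdpos.trans_le hd)]
    have hnum : ∫ x in stekDom (m+1+1) R₁ R₂ c, ‖gradient u x‖^2 < σ.real univ * L := by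
      rw [hdom, setIntegral_congr_fun (g := fun x => ((‖x‖^(m+1))⁻¹)^2) (measurableSet_ball.diff measurableSet_closedBall)
        (fun x hx => hu2 x (by simpa using hx.2)), ← hLv, hσd, ← num_zero h1 h12]
      exact bathtub (Nat.succ_pos m) h1 h12 c hc hsub
    refine hnum.trans_le ?_
    calc σ.real univ * L = (k * L)⁻¹ * (k * (σ.real univ * L^2)) := by field_simp
      _ ≤ _ := mul_le_mul_of_nonneg_left hd (by positivity)
  exact ⟨hlt.le, fun h => absurd h hlt.ne, fun h => absurd h hne⟩

end helpers

theorem stmt_8 (n : ℕ) (hn : 3 ≤ n) (R₁ R₂ : ℝ) (h1 : 0 < R₁) (h12 : R₁ < R₂)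
    (c : EuclideanSpace ℝ (Fin n))
    (hsub : closure (Metric.ball (0 : EuclideanSpace ℝ (Fin n)) R₁) ⊆ Metric.ball c R₂) :
    tau1 n R₁ R₂ c ≤ tau1 n R₁ R₂ 0 ∧
    (tau1 n R₁ R₂ c = tau1 n R₁ R₂ 0 ↔ stekDom n R₁ R₂ c = stekDom n R₁ R₂ 0) := by
  obtain ⟨m, rfl⟩ : ∃ m, n = m + 1 + 1 := ⟨n - 2, by omega⟩
  have hm : 0 < m := by omega
  exact stek_main hm h1 h12 c hsub
end
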